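/- (Excess transfer risk for the estimated bias, ERM algorithm with exact meta-gradients.) Under bounded inputs and Lipschitz loss, assume R, L > 0, Var_m > 0 and m ≠ 0. Let h̄_T be the output of the exact-gradient meta-SGD: h^{(1)} = 0 and, for t = 1, …, T with independently sampled tasks μ_t ∼ ρ and datasets Z^{(t)} ∼ μ_t^n, h^{(t+1)} = h^{(t)} − γ ∇^{(t)} with exact meta-gradient ∇^{(t)} = −λ( w_{h^{(t)}}(Z^{(t)}) − h^{(t)} ) and h̄_T = (1/T) Σ_{t=1}^T h^{(t)}, run with γ = ‖m‖/(L R √T) and λ = R L /(Var_m √n). Then the biased ERM with bias h̄_T satisfies E[ E_n(w_{h̄_T}) ] − E_ρ ≤ 2 R L · Var_m · n^{−1/2} + ‖m‖ L R · T^{−1/2}, where the outer expectation is over the sampling of the T training tasks and datasets. -/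

import Mathlib

open MeasureTheory Real
open scoped InnerProductSpace

noncomputable section

abbrev Vec (d : ℕ) := EuclideanSpace ℝ (Fin d)
abbrev Pt (d : ℕ) := Vec d × ℝ

/-- Empirical risk of `w` on the dataset `S`. -/
def empRisk {d n : ℕ} (ℓ : ℝ → ℝ → ℝ) (S : Fin n → Pt d) (w : Vec d) : ℝ :=
  (n : ℝ)⁻¹ * ∑ k, ℓ (⟪(S k).1, w⟫_ℝ) ((S k).2)

/-- Biased regularized empirical risk. -/
def regRisk {d n : ℕ} (ℓ : ℝ → ℝ → ℝ) (lam : ℝ) (S : Fin n → Pt d)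
    (h w : Vec d) : ℝ :=
  empRisk ℓ S w + lam / 2 * ‖w - h‖ ^ 2

/-- True risk of `w` under the task distribution `μ`. -/
def trueRisk {d : ℕ} (ℓ : ℝ → ℝ → ℝ) (μ : Measure (Pt d)) (w : Vec d) : ℝ :=
  ∫ z, ℓ (⟪z.1, w⟫_ℝ) (z.2) ∂μ

/-- `u` is a subgradient of `f : ℝ → ℝ` at `a`. -/
def IsSubgradAt (f : ℝ → ℝ) (u a : ℝ) : Prop :=
  ∀ b, f a + u * (b - a) ≤ f b

section FiniteSampling

open Finset
open scoped BigOperators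

variable {I : Type*} [Fintype I]

lemma expect_fin_succ_eq_expect_insertNth {n : ℕ} (J : Fin (n + 1))
    (f : (Fin (n + 1) → I) → ℝ) :
    𝔼 τ, f τ = 𝔼 i, 𝔼 σ : Fin n → I, f (J.insertNth i σ) := by
  rw [← Finset.expect_product', univ_product_univ]
  exact (Fintype.expect_equiv (Fin.insertNthEquiv (fun _ => I) J) _ _ fun p => rfl).symm

lemma expect_comp_eval [Nonempty I] {n : ℕ} (j : Fin n) (g : I → ℝ) :
    𝔼 σ : Fin n → I, g (σ j) = 𝔼 i, g i := by
  cases n with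
  | zero => exact j.elim0
  | succ m =>
    rw [expect_fin_succ_eq_expect_insertNth j]
    simp

variable {V : Type*} [NormedAddCommGroup V] [InnerProductSpace ℝ V]

lemma expect_norm_sum_sq_of_centered [Nonempty I] {a : I → V}
    (ha : ∀ y, 𝔼 i, ⟪a i, y⟫_ℝ = 0) (n : ℕ) :
    𝔼 σ : Fin n → I, ‖∑ j, a (σ j)‖ ^ 2 = n * 𝔼 i, ‖a i‖ ^ 2 := by
  induction n with
  | zero => simp
  | succ n ih =>
    rw [expect_fin_succ_eq_expect_insertNth 0]
    have hexp : ∀ (i : I) (σ : Fin n → I),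
        ‖∑ j, a ((0 : Fin (n + 1)).insertNth (α := fun _ => I) i σ j)‖ ^ 2
          = ‖a i‖ ^ 2 + 2 * ⟪a i, ∑ j, a (σ j)⟫_ℝ + ‖∑ j, a (σ j)‖ ^ 2 := by
      intro i σ
      rw [Fin.sum_univ_succ]
      simp [norm_add_sq_real]
    simp_rw [hexp, expect_add_distrib, Fintype.expect_const, ih, ← mul_expect]
    rw [expect_comm]
    simp_rw [ha]
    simp
    ring

lemma exists_inner_eq_expect {κ : Type*} [Fintype κ] (f : κ → V) :
    ∃ v : V, ∀ y, ⟪v, y⟫_ℝ = 𝔼 k, ⟪f k, y⟫_ℝ := by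
  refine ⟨(Fintype.card κ : ℝ)⁻¹ • ∑ k, f k, fun y => ?_⟩
  rw [inner_smul_left, sum_inner, Fintype.expect_eq_sum_div_card]
  simp [div_eq_inv_mul]

/-- The quadratic inequality behind the leave-one-out comparison of minimizers on `n` and on
`n + 1` points: `u τ J` is the force exerted by the `J`-th point and `ub i` is its mean over all
samples that contain the point `i`. -/
lemma neg_expect_sq_le_of_force_balance [Nonempty I] {n : ℕ} {κ : ℝ}
    (vS : (Fin n → I) → V) (vT : (Fin (n + 1) → I) → V)
    (u : (Fin (n + 1) → I) → Fin (n + 1) → V)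
    (hu : ∀ τ, ∑ J, u τ J = -(κ • vT τ))
    (ub : I → V)
    (hub : ∀ i y, ⟪ub i, y⟫_ℝ
      = 𝔼 J : Fin (n + 1), 𝔼 σ : Fin n → I, ⟪u (J.insertNth i σ) J, y⟫_ℝ) :
    -(n * 𝔼 J : Fin (n + 1), 𝔼 i, 𝔼 σ : Fin n → I,
        ‖u (J.insertNth i σ) J - κ • (vS σ - vT (J.insertNth i σ))‖ ^ 2)
      ≤ κ * (𝔼 σ, ⟪vS σ, ∑ j, ub (σ j)⟫_ℝ) + κ ^ 2 / 2 * (𝔼 σ, ‖vS σ‖ ^ 2)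
        + n / (n + 1) * κ ^ 2 * 𝔼 τ, ‖vT τ‖ ^ 2 := by
  obtain ⟨μ, hμ⟩ := exists_inner_eq_expect ub
  set a : I → V := fun i => ub i - μ with ha
  have haz : ∀ y, 𝔼 i, ⟪a i, y⟫_ℝ = 0 := fun y => by
    simp [ha, inner_sub_left, expect_sub_distrib, hμ]
  have haz' : ∀ y, 𝔼 i, ⟪y, a i⟫_ℝ = 0 := fun y => by
    simpa [real_inner_comm] using haz y
  have hcenter : ∀ (k : ℕ) (y : V), 𝔼 σ : Fin k → I, ⟪∑ j, a (σ j), y⟫_ℝ = 0 := fun k y => by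
    simp_rw [sum_inner, expect_sum_comm, expect_comp_eval _ fun i => ⟪a i, y⟫_ℝ, haz]
    simp
  set A := 𝔼 i, ‖a i‖ ^ 2 with hA
  set e : Fin (n + 1) → I → (Fin n → I) → V := fun J i σ =>
    u (J.insertNth i σ) J - κ • (vS σ - vT (J.insertNth i σ)) with he
  set P := 𝔼 J : Fin (n + 1), 𝔼 i, 𝔼 σ : Fin n → I, ⟪e J i σ, a i⟫_ℝ with hP
  set Q := 𝔼 J : Fin (n + 1), 𝔼 i, 𝔼 σ : Fin n → I, ‖e J i σ‖ ^ 2 with hQ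
  have hmean : ∀ y, κ * 𝔼 τ, ⟪vT τ, y⟫_ℝ = -((n + 1) * ⟪μ, y⟫_ℝ) := fun y => by
    have h1 : ∀ τ, κ * ⟪vT τ, y⟫_ℝ = -∑ J, ⟪u τ J, y⟫_ℝ := fun τ => by
      rw [← sum_inner, hu, inner_neg_left, inner_smul_left]; simp
    rw [mul_expect]
    simp_rw [h1, expect_neg_distrib, expect_sum_comm]
    rw [hμ]
    simp_rw [hub]
    rw [expect_comm, Fintype.expect_eq_sum_div_card (fun J : Fin (n + 1) => _)]
    simp_rw [fun J : Fin (n + 1) => expect_fin_succ_eq_expect_insertNth J fun τ => ⟪u τ J, y⟫_ℝ]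
    simp
    field_simp
  have hcross : κ * 𝔼 τ, ⟪vT τ, ∑ J, a (τ J)⟫_ℝ = (n + 1) * (P - A) := by
    have h1 : ∀ (J : Fin (n + 1)) (i : I) (σ : Fin n → I),
        κ * ⟪vT (J.insertNth i σ), a i⟫_ℝ
          = κ * ⟪vS σ, a i⟫_ℝ - ⟪u (J.insertNth i σ) J, a i⟫_ℝ + ⟪e J i σ, a i⟫_ℝ := by
      intro J i σ
      simp only [he, inner_sub_left, inner_smul_left]
      simp
      ring
    have h2 : ∀ i, 𝔼 J : Fin (n + 1), 𝔼 σ : Fin n → I, ⟪u (J.insertNth i σ) J, a i⟫_ℝ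
        = ‖a i‖ ^ 2 + ⟪μ, a i⟫_ℝ := fun i => by
      rw [← hub, ← real_inner_self_eq_norm_sq, ← inner_add_left]; simp [ha]
    have h3 : 𝔼 J : Fin (n + 1), 𝔼 i, 𝔼 σ : Fin n → I, ⟪u (J.insertNth i σ) J, a i⟫_ℝ = A := by
      rw [expect_comm]
      simp_rw [h2, expect_add_distrib, haz']
      simp [hA]
    have h4 : 𝔼 i, 𝔼 σ : Fin n → I, κ * ⟪vS σ, a i⟫_ℝ = 0 := by
      rw [expect_comm]
      simp_rw [← mul_expect, haz']
      simp
    have h5 : 𝔼 J : Fin (n + 1), 𝔼 i, 𝔼 σ : Fin n → I, κ * ⟪vT (J.insertNth i σ), a i⟫_ℝ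
        = P - A := by
      simp_rw [h1, expect_add_distrib, expect_sub_distrib, h4]
      rw [h3, Fintype.expect_const]
      ring
    rw [mul_expect]
    simp_rw [inner_sum, mul_sum, expect_sum_comm]
    simp_rw [fun J : Fin (n + 1) => expect_fin_succ_eq_expect_insertNth J
      fun τ => κ * ⟪vT τ, a (τ J)⟫_ℝ, Fin.insertNth_apply_same]
    rw [← h5, Fintype.expect_eq_sum_div_card (fun J : Fin (n + 1) => _)]
    simp
    field_simp
  have hS : 0 ≤ κ ^ 2 * (𝔼 σ, ‖vS σ‖ ^ 2) + 2 * κ * (𝔼 σ, ⟪vS σ, ∑ j, ub (σ j)⟫_ℝ)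
      + (n ^ 2 * ‖μ‖ ^ 2 + n * A) := by
    have h1 : ∀ σ : Fin n → I, ∑ j, ub (σ j) = (n : ℝ) • μ + ∑ j, a (σ j) := fun σ => by
      simp [ha, sum_sub_distrib, Nat.cast_smul_eq_nsmul]
    have h2 : 𝔼 σ : Fin n → I, ‖∑ j, ub (σ j)‖ ^ 2 = n ^ 2 * ‖μ‖ ^ 2 + n * A := by
      have : ∀ σ : Fin n → I, ‖∑ j, ub (σ j)‖ ^ 2
          = n ^ 2 * ‖μ‖ ^ 2 + 2 * n * ⟪∑ j, a (σ j), μ⟫_ℝ + ‖∑ j, a (σ j)‖ ^ 2 := fun σ => by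
        rw [h1, norm_add_sq_real, norm_smul, inner_smul_left, real_inner_comm]
        simp
        ring
      simp_rw [this, expect_add_distrib, ← mul_expect, hcenter,
        expect_norm_sum_sq_of_centered haz, Fintype.expect_const]
      ring
    have h3 : ∀ σ : Fin n → I, ‖κ • vS σ + ∑ j, ub (σ j)‖ ^ 2
        = κ ^ 2 * ‖vS σ‖ ^ 2 + 2 * κ * ⟪vS σ, ∑ j, ub (σ j)⟫_ℝ + ‖∑ j, ub (σ j)‖ ^ 2 := fun σ => by
      rw [norm_add_sq_real, norm_smul, inner_smul_left, mul_pow, Real.norm_eq_abs, sq_abs]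
      simp
      ring
    have h4 : 0 ≤ 𝔼 σ : Fin n → I, ‖κ • vS σ + ∑ j, ub (σ j)‖ ^ 2 :=
      expect_nonneg fun σ _ => by positivity
    simp_rw [h3, expect_add_distrib, ← mul_expect, h2] at h4
    exact h4
  have hT : 0 ≤ κ ^ 2 * (𝔼 τ, ‖vT τ‖ ^ 2) - (n + 1) ^ 2 * ‖μ‖ ^ 2 + (n + 1) * (P - A)
      + 1 / 4 * ((n + 1) * A) := by
    have h1 : ∀ τ : Fin (n + 1) → I,
        ‖κ • vT τ + (((n : ℝ) + 1) • μ + (1 / 2 : ℝ) • ∑ J, a (τ J))‖ ^ 2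
          = κ ^ 2 * ‖vT τ‖ ^ 2 + 2 * (n + 1) * (κ * ⟪vT τ, μ⟫_ℝ)
            + κ * ⟪vT τ, ∑ J, a (τ J)⟫_ℝ + (n + 1) ^ 2 * ‖μ‖ ^ 2
            + (n + 1) * ⟪∑ J, a (τ J), μ⟫_ℝ + 1 / 4 * ‖∑ J, a (τ J)‖ ^ 2 := fun τ => by
      rw [norm_add_sq_real, norm_add_sq_real, norm_smul, norm_smul, norm_smul, inner_add_right,
        inner_smul_left, inner_smul_left, inner_smul_right, inner_smul_right, inner_smul_left,
        inner_smul_right, real_inner_comm (∑ J, a (τ J)) μ, mul_pow, mul_pow, mul_pow,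
        Real.norm_eq_abs, sq_abs, Real.norm_eq_abs, sq_abs, Real.norm_eq_abs, sq_abs]
      simp only [conj_trivial]
      ring
    have h4 : 0 ≤ 𝔼 τ : Fin (n + 1) → I,
        ‖κ • vT τ + (((n : ℝ) + 1) • μ + (1 / 2 : ℝ) • ∑ J, a (τ J))‖ ^ 2 :=
      expect_nonneg fun σ _ => by positivity
    simp_rw [h1, expect_add_distrib, ← mul_expect, hmean, hcross, hcenter,
      expect_norm_sum_sq_of_centered haz, Fintype.expect_const, real_inner_self_eq_norm_sq] at h4
    push_cast at h4
    linarith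
  have hE : 0 ≤ Q - P + 1 / 4 * A := by
    have h1 : ∀ (J : Fin (n + 1)) (i : I) (σ : Fin n → I), ‖e J i σ - (1 / 2 : ℝ) • a i‖ ^ 2
        = ‖e J i σ‖ ^ 2 - ⟪e J i σ, a i⟫_ℝ + 1 / 4 * ‖a i‖ ^ 2 := fun J i σ => by
      rw [norm_sub_sq_real, norm_smul, inner_smul_right, mul_pow]
      norm_num
      ring
    have h4 : 0 ≤ 𝔼 J : Fin (n + 1), 𝔼 i, 𝔼 σ : Fin n → I, ‖e J i σ - (1 / 2 : ℝ) • a i‖ ^ 2 :=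
      expect_nonneg fun J _ => expect_nonneg fun i _ => expect_nonneg fun σ _ => by positivity
    simp_rw [h1, expect_add_distrib, expect_sub_distrib, ← mul_expect, Fintype.expect_const] at h4
    exact h4
  have hn : (0 : ℝ) ≤ n := n.cast_nonneg
  have hM : 0 ≤ ‖μ‖ ^ 2 := by positivity
  have hT' := mul_nonneg (show (0 : ℝ) ≤ n / (n + 1) by positivity) hT
  have hT'' : (n : ℝ) / (n + 1) * (κ ^ 2 * (𝔼 τ, ‖vT τ‖ ^ 2) - (n + 1) ^ 2 * ‖μ‖ ^ 2
      + (n + 1) * (P - A) + 1 / 4 * ((n + 1) * A))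
      = n / (n + 1) * κ ^ 2 * (𝔼 τ, ‖vT τ‖ ^ 2) - n * (n + 1) * ‖μ‖ ^ 2 + n * (P - A)
        + 1 / 4 * (n * A) := by
    field_simp
  rw [hT''] at hT'
  nlinarith [mul_nonneg hn hE, mul_nonneg hn hM, mul_nonneg hn (mul_nonneg hn hM)]

end FiniteSampling

section Subgradients

open Set Filter Topology

lemma isSubgradAt_of_mem_Icc {f : ℝ → ℝ} (hf : ConvexOn ℝ univ f) {a s : ℝ}
    (hs : s ∈ Icc (derivWithin f (Iio a) a) (derivWithin f (Ioi a) a)) : IsSubgradAt f s a := by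
  intro b
  rcases lt_trichotomy a b with hab | rfl | hab
  · have h := hf.rightDeriv_le_slope_of_mem_interior (x := a) (y := b) (by simp) (mem_univ _) hab
    rw [slope_def_field, le_div_iff₀ (sub_pos.2 hab)] at h
    nlinarith [hs.2]
  · simp
  · have h := hf.slope_le_leftDeriv_of_mem_interior (x := b) (y := a) (mem_univ _) (by simp) hab
    rw [slope_def_field, div_le_iff₀ (sub_pos.2 hab)] at h
    nlinarith [hs.1]

lemma IsSubgradAt.abs_le {f : ℝ → ℝ} {L s a : ℝ} (hs : IsSubgradAt f s a)
    (hf : ∀ a b, |f a - f b| ≤ L * |a - b|) : |s| ≤ L := by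
  have h1 := hs (a + 1)
  have h2 := hs (a - 1)
  have h3 := hf (a + 1) a
  have h4 := hf (a - 1) a
  simp only [add_sub_cancel_left, abs_one, mul_one, sub_sub_cancel_left, abs_neg] at h3 h4
  rw [_root_.abs_le] at h3 h4 ⊢
  constructor <;> linarith

lemma exists_mem_Icc_hasDerivWithinAt {f : ℝ → ℝ} (hf : ConvexOn ℝ univ f) (a c : ℝ) :
    ∃ s ∈ Icc (derivWithin f (Iio a) a) (derivWithin f (Ioi a) a),
      HasDerivWithinAt (fun t => f (a + t * c)) (s * c) (Ioi 0) 0 := by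
  have hle := hf.leftDeriv_le_rightDeriv_of_mem_interior (x := a) (by simp)
  have hlin : HasDerivWithinAt (fun t : ℝ => a + t * c) c (Ioi 0) 0 := by
    simpa using ((hasDerivAt_id (0 : ℝ)).mul_const c |>.const_add a).hasDerivWithinAt
  rcases lt_trichotomy c 0 with hc | rfl | hc
  · refine ⟨_, left_mem_Icc.2 hle, ?_⟩
    refine HasDerivWithinAt.comp (h₂ := f) (s' := Iio a) 0 ?_ hlin ?_
    · simpa using hf.hasDerivWithinAt_leftDeriv_of_mem_interior (x := a) (by simp)
    · intro t ht
      have : t * c < 0 := mul_neg_of_pos_of_neg ht hc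
      simpa using this
  · exact ⟨_, left_mem_Icc.2 hle, by simpa using hasDerivWithinAt_const _ _ _⟩
  · refine ⟨_, right_mem_Icc.2 hle, ?_⟩
    refine HasDerivWithinAt.comp (h₂ := f) (s' := Ioi a) 0 ?_ hlin ?_
    · simpa using hf.hasDerivWithinAt_rightDeriv_of_mem_interior (x := a) (by simp)
    · intro t ht
      have : 0 < t * c := mul_pos ht hc
      simpa using this

variable {V : Type*} [NormedAddCommGroup V] [InnerProductSpace ℝ V]

/-- Optimality condition for a ridge-regularized sum of convex functions of linear forms. -/
lemma exists_subgrad_sum_eq [CompleteSpace V] {J : Type*} [Fintype J] {x : J → V} {φ : J → ℝ → ℝ}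
    (hφ : ∀ j, ConvexOn ℝ univ (φ j)) {κ : ℝ} {h w₀ : V}
    (hmin : ∀ w, ∑ j, φ j ⟪x j, w₀⟫_ℝ + κ / 2 * ‖w₀ - h‖ ^ 2
      ≤ ∑ j, φ j ⟪x j, w⟫_ℝ + κ / 2 * ‖w - h‖ ^ 2) :
    ∃ s : J → ℝ, (∀ j, IsSubgradAt (φ j) (s j) ⟪x j, w₀⟫_ℝ)
      ∧ ∑ j, s j • x j = -(κ • (w₀ - h)) := by
  set B : Set (J → ℝ) := Set.pi univ fun j =>
    Icc (derivWithin (φ j) (Iio ⟪x j, w₀⟫_ℝ) ⟪x j, w₀⟫_ℝ)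
      (derivWithin (φ j) (Ioi ⟪x j, w₀⟫_ℝ) ⟪x j, w₀⟫_ℝ) with hB
  have hBc : IsCompact B := isCompact_univ_pi fun j => isCompact_Icc
  have hBv : Convex ℝ B := convex_pi fun j _ => convex_Icc _ _
  let Λ : (J → ℝ) →ₗ[ℝ] V := Fintype.linearCombination ℝ x
  have hΛ : ∀ s, Λ s = ∑ j, s j • x j := fun s => Fintype.linearCombination_apply ..
  have hΛc : Continuous Λ := by
    have : (Λ : (J → ℝ) → V) = fun s => ∑ j, s j • x j := funext hΛ
    rw [this]
    fun_prop
  by_cases hmem : -(κ • (w₀ - h)) ∈ Λ '' B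
  · obtain ⟨s, hs, hse⟩ := hmem
    exact ⟨s, fun j => isSubgradAt_of_mem_Icc (hφ j) (hs j (mem_univ j)), by rw [← hΛ, hse]⟩
  exfalso
  obtain ⟨f, c, hf1, hf2⟩ := geometric_hahn_banach_closed_point (hBv.linear_image Λ)
    (hBc.image hΛc).isClosed hmem
  set q := (InnerProductSpace.toDual ℝ V).symm f with hq
  have hfq : ∀ y, f y = ⟪q, y⟫_ℝ := fun y => by
    rw [hq, InnerProductSpace.toDual_symm_apply]
  choose s hs hsd using fun j =>
    exists_mem_Icc_hasDerivWithinAt (hφ j) ⟪x j, w₀⟫_ℝ ⟪x j, q⟫_ℝ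
  have h1 := hf1 (Λ s) ⟨s, fun j _ => hs j, rfl⟩
  have hder : HasDerivWithinAt (fun t : ℝ => ∑ j, φ j (⟪x j, w₀⟫_ℝ + t * ⟪x j, q⟫_ℝ)
      + κ / 2 * (‖w₀ - h‖ ^ 2 + t * (2 * ⟪w₀ - h, q⟫_ℝ) + t ^ 2 * ‖q‖ ^ 2))
      (∑ j, s j * ⟪x j, q⟫_ℝ + κ * ⟪w₀ - h, q⟫_ℝ) (Ioi 0) 0 := by
    refine HasDerivWithinAt.add (HasDerivWithinAt.fun_sum fun j _ => hsd j) ?_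
    have : HasDerivAt (fun t : ℝ => κ / 2 * (‖w₀ - h‖ ^ 2 + t * (2 * ⟪w₀ - h, q⟫_ℝ)
        + t ^ 2 * ‖q‖ ^ 2)) (κ * ⟪w₀ - h, q⟫_ℝ) 0 := by
      have := ((((hasDerivAt_id (0 : ℝ)).mul_const (2 * ⟪w₀ - h, q⟫_ℝ)).const_add
        (‖w₀ - h‖ ^ 2)).add (((hasDerivAt_id (0 : ℝ)).pow 2).mul_const (‖q‖ ^ 2))).const_mul (κ / 2)
      refine (this.congr_deriv ?_)
      simp
      ring
    exact this.hasDerivWithinAt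
  have hnn : 0 ≤ ∑ j, s j * ⟪x j, q⟫_ℝ + κ * ⟪w₀ - h, q⟫_ℝ := by
    refine ge_of_tendsto ((hasDerivWithinAt_iff_tendsto_slope' self_notMem_Ioi).mp hder) ?_
    filter_upwards [self_mem_nhdsWithin] with t ht
    rw [slope_def_field]
    refine div_nonneg (sub_nonneg.2 ?_) (sub_nonneg.2 (le_of_lt ht))
    have hm := hmin (w₀ + t • q)
    have e1 : ‖w₀ + t • q - h‖ ^ 2 = ‖w₀ - h‖ ^ 2 + t * (2 * ⟪w₀ - h, q⟫_ℝ) + t ^ 2 * ‖q‖ ^ 2 := by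
      rw [add_sub_right_comm, norm_add_sq_real, inner_smul_right, norm_smul, mul_pow,
        Real.norm_eq_abs, sq_abs]
      ring
    simp only [inner_add_right, inner_smul_right, e1] at hm
    simpa using hm
  rw [hfq, hΛ, inner_sum] at h1
  rw [hfq, inner_neg_right, inner_smul_right, real_inner_comm] at hf2
  simp only [real_inner_comm _ q, inner_smul_left, conj_trivial] at h1
  linarith

lemma exists_forall_sum_add_sq_le [FiniteDimensional ℝ V] {J : Type*} [Fintype J] {x : J → V}
    {φ : J → ℝ → ℝ} (hφ : ∀ j, ConvexOn ℝ univ (φ j)) (hφ0 : ∀ j a, 0 ≤ φ j a) {κ : ℝ}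
    (hκ : 0 < κ) (h : V) :
    ∃ w₀, ∀ w, ∑ j, φ j ⟪x j, w₀⟫_ℝ + κ / 2 * ‖w₀ - h‖ ^ 2
      ≤ ∑ j, φ j ⟪x j, w⟫_ℝ + κ / 2 * ‖w - h‖ ^ 2 := by
  have hc : ∀ j, Continuous (φ j) := fun j => by
    simpa [continuousOn_univ] using (hφ j).continuousOn isOpen_univ
  refine Continuous.exists_forall_le (by fun_prop) ?_
  have : Tendsto (fun w => κ / 2 * ‖w - h‖ ^ 2) (cocompact V) atTop := by
    refine Tendsto.const_mul_atTop (by positivity) ((tendsto_pow_atTop two_ne_zero).comp ?_)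
    exact tendsto_norm_cocompact_atTop.comp (Homeomorph.subRight h).isClosedEmbedding.tendsto_cocompact
  exact tendsto_atTop_mono (fun w => le_add_of_nonneg_left
    (Finset.sum_nonneg fun j _ => hφ0 j _)) this

end Subgradients

section LeaveOneOut

open Finset
open scoped BigOperators

variable {V : Type*} [NormedAddCommGroup V] [InnerProductSpace ℝ V]

/-- If removing a point with force `s • x` displaces the minimizer by `p`, then the residual
of the linear response is controlled by the increase `D` of the loss at that point. -/
lemma norm_residual_sq_le {x p : V} {s κ L R D : ℝ} (hκ : 0 < κ) (hR : 0 ≤ R)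
    (hx : ‖x‖ ≤ R) (hs : |s| ≤ L) (hD : D ≤ L * |⟪x, p⟫_ℝ|)
    (hp : κ * ‖p‖ ^ 2 ≤ ⟪s • x, p⟫_ℝ) :
    ‖s • x - κ • p‖ ^ 2 ≤ (L * R) ^ 2 - κ * D := by
  set q := ⟪x, p⟫_ℝ with hq
  have hsq : ⟪s • x, p⟫_ℝ = s * q := by rw [inner_smul_left]; rfl
  rw [hsq] at hp
  have hexp : ‖s • x - κ • p‖ ^ 2 = s ^ 2 * ‖x‖ ^ 2 - 2 * κ * (s * q) + κ ^ 2 * ‖p‖ ^ 2 := by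
    rw [norm_sub_sq_real, norm_smul, norm_smul, inner_smul_right, hsq, mul_pow, mul_pow,
      Real.norm_eq_abs, sq_abs, Real.norm_eq_abs, sq_abs]
    ring
  have hsq0 : 0 ≤ s * q := le_trans (by positivity) hp
  have habs : s * q = |s| * |q| := by rw [← abs_mul, abs_of_nonneg hsq0]
  have hqp : |q| ≤ R * ‖p‖ :=
    (abs_real_inner_le_norm x p).trans (by gcongr)
  have hκq : κ * |q| ≤ R ^ 2 * |s| := by
    rcases (abs_nonneg q).eq_or_lt with h0 | h0
    · rw [← h0]; simp; positivity
    · have h1 : |q| * |q| ≤ (R * ‖p‖) * (R * ‖p‖) := by gcongr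
      have h2 : κ * |q| * |q| ≤ R ^ 2 * |s| * |q| := by
        nlinarith [mul_le_mul_of_nonneg_left hp (sq_nonneg R),
          mul_le_mul_of_nonneg_left h1 hκ.le]
      exact le_of_mul_le_mul_right h2 h0
  have hxR : ‖x‖ ^ 2 ≤ R ^ 2 := by gcongr
  have h3 : s ^ 2 * ‖x‖ ^ 2 ≤ |s| ^ 2 * R ^ 2 := by rw [sq_abs]; gcongr
  have h4 : 0 ≤ (L - |s|) * (R ^ 2 * (L + |s|) - κ * |q|) := by
    refine mul_nonneg (sub_nonneg.2 hs) (sub_nonneg.2 (hκq.trans ?_))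
    nlinarith [abs_nonneg s, sq_nonneg R, mul_nonneg (sq_nonneg R) ((abs_nonneg s).trans hs)]
  rw [hexp]
  nlinarith [mul_le_mul_of_nonneg_left hp hκ.le, mul_le_mul_of_nonneg_left hD hκ.le]

lemma IsSubgradAt.monotone {f : ℝ → ℝ} {s t a b : ℝ} (hs : IsSubgradAt f s a)
    (ht : IsSubgradAt f t b) : 0 ≤ (s - t) * (a - b) := by
  have h1 := hs b
  have h2 := ht a
  nlinarith

variable {I : Type*} [Fintype I]

/-- Leave-one-out generalization bound for ridge-regularized convex linear models, with the
uniform distribution on a finite set of data points. -/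
lemma expect_loss_le_expect_objective [FiniteDimensional ℝ V] [Nonempty I] {n : ℕ} (hn : 1 ≤ n)
    {x : I → V} {φ : I → ℝ → ℝ} {L R κ : ℝ} (hR : 0 ≤ R) (hx : ∀ i, ‖x i‖ ≤ R)
    (hφ : ∀ i, ConvexOn ℝ Set.univ (φ i)) (hφ0 : ∀ i a, 0 ≤ φ i a)
    (hφL : ∀ i a b, |φ i a - φ i b| ≤ L * |a - b|) (hκ : 0 < κ) (h : V)
    (wS : (Fin n → I) → V)
    (hwS : ∀ σ w, ∑ j, φ (σ j) ⟪x (σ j), wS σ⟫_ℝ + κ / 2 * ‖wS σ - h‖ ^ 2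
      ≤ ∑ j, φ (σ j) ⟪x (σ j), w⟫_ℝ + κ / 2 * ‖w - h‖ ^ 2) :
    𝔼 i, 𝔼 σ : Fin n → I, φ i ⟪x i, wS σ⟫_ℝ
      ≤ (n : ℝ)⁻¹ * (𝔼 σ, (∑ j, φ (σ j) ⟪x (σ j), wS σ⟫_ℝ + κ / 2 * ‖wS σ - h‖ ^ 2))
        + (L * R) ^ 2 / κ := by
  choose wT hwT using fun τ : Fin (n + 1) → I =>
    exists_forall_sum_add_sq_le (x := fun J => x (τ J)) (φ := fun J => φ (τ J))
      (fun J => hφ (τ J)) (fun J => hφ0 (τ J)) hκ h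
  choose s hs hssum using fun τ : Fin (n + 1) → I =>
    exists_subgrad_sum_eq (fun J => hφ (τ J)) (hwT τ)
  choose s' hs' hssum' using fun σ : Fin n → I =>
    exists_subgrad_sum_eq (fun j => hφ (σ j)) (hwS σ)
  set u : (Fin (n + 1) → I) → Fin (n + 1) → V := fun τ J => s τ J • x (τ J) with hu
  obtain ⟨ub, hub⟩ : ∃ ub : I → V, ∀ i y, ⟪ub i, y⟫_ℝ
      = 𝔼 J : Fin (n + 1), 𝔼 σ : Fin n → I, ⟪u (J.insertNth i σ) J, y⟫_ℝ := by
    choose ub hub using fun i => exists_inner_eq_expect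
      (fun k : Fin (n + 1) × (Fin n → I) => u (k.1.insertNth i k.2) k.1)
    refine ⟨ub, fun i y => ?_⟩
    rw [hub, ← Finset.expect_product', univ_product_univ]
  have hcore := neg_expect_sq_le_of_force_balance (fun σ => wS σ - h) (fun τ => wT τ - h) u hssum
    ub hub
  simp only [sub_sub_sub_cancel_right] at hcore
  -- the displacement is controlled by the force
  have hdisp : ∀ (J : Fin (n + 1)) (i : I) (σ : Fin n → I),
      κ * ‖wS σ - wT (J.insertNth i σ)‖ ^ 2
        ≤ ⟪u (J.insertNth i σ) J, wS σ - wT (J.insertNth i σ)⟫_ℝ := by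
    intro J i σ
    set τ : Fin (n + 1) → I := J.insertNth i σ with hτ
    have hτj : ∀ j, τ (J.succAbove j) = σ j := fun j => by simp [hτ]
    have h1 := hssum τ
    rw [Fin.sum_univ_succAbove _ J] at h1
    have h2 := hssum' σ
    have h3 : 0 ≤ ∑ j, (s τ (J.succAbove j) - s' σ j) *
        (⟪x (σ j), wT τ⟫_ℝ - ⟪x (σ j), wS σ⟫_ℝ) := by
      refine sum_nonneg fun j _ => IsSubgradAt.monotone (f := φ (σ j)) ?_ (hs' σ j)
      have := hs τ (J.succAbove j)
      rwa [hτj] at this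
    have h4 : ∑ j, (s τ (J.succAbove j) - s' σ j) *
        (⟪x (σ j), wT τ⟫_ℝ - ⟪x (σ j), wS σ⟫_ℝ)
        = ⟪∑ j, s τ (J.succAbove j) • x (τ (J.succAbove j)) - ∑ j, s' σ j • x (σ j),
          wT τ - wS σ⟫_ℝ := by
      rw [← sum_sub_distrib, sum_inner]
      refine sum_congr rfl fun j _ => ?_
      rw [hτj, ← sub_smul, inner_smul_left, inner_sub_right]; rfl
    have h5 : ∑ j, s τ (J.succAbove j) • x (τ (J.succAbove j)) - ∑ j, s' σ j • x (σ j)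
        = κ • (wS σ - wT τ) - u τ J := by
      rw [h2, eq_sub_of_add_eq' h1]
      simp only [smul_sub, hu]
      abel
    rw [h4, h5, ← neg_sub (wS σ), inner_neg_right, inner_sub_left, inner_smul_left,
      real_inner_self_eq_norm_sq] at h3
    simp only [conj_trivial] at h3
    linarith
  set Rn := 𝔼 i, 𝔼 σ : Fin n → I, φ i ⟪x i, wS σ⟫_ℝ with hRn
  set r := 𝔼 J : Fin (n + 1), 𝔼 i, 𝔼 σ : Fin n → I, φ i ⟪x i, wT (J.insertNth i σ)⟫_ℝ with hr
  set Q := 𝔼 J : Fin (n + 1), 𝔼 i, 𝔼 σ : Fin n → I,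
    ‖u (J.insertNth i σ) J - κ • (wS σ - wT (J.insertNth i σ))‖ ^ 2 with hQ
  have hQle : Q ≤ (L * R) ^ 2 - κ * (Rn - r) := by
    have h1 : Q ≤ 𝔼 J : Fin (n + 1), 𝔼 i, 𝔼 σ : Fin n → I, ((L * R) ^ 2
        - κ * (φ i ⟪x i, wS σ⟫_ℝ - φ i ⟪x i, wT (J.insertNth i σ)⟫_ℝ)) := by
      refine expect_le_expect fun J _ => expect_le_expect fun i _ => expect_le_expect fun σ _ => ?_
      have hd := hdisp J i σ
      have hs1 := (hs (J.insertNth i σ) J)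
      simp only [hu, Fin.insertNth_apply_same] at hd hs1 ⊢
      refine norm_residual_sq_le hκ hR (hx i) (hs1.abs_le (hφL i)) ?_ hd
      rw [inner_sub_right]
      exact (le_abs_self _).trans (hφL i _ _)
    refine h1.trans_eq ?_
    simp_rw [expect_sub_distrib, ← mul_expect, expect_sub_distrib, Fintype.expect_const]
    rfl
  have hforce : 𝔼 i, 𝔼 J : Fin (n + 1), 𝔼 σ : Fin n → I,
      ⟪u (J.insertNth i σ) J, wT (J.insertNth i σ) - h⟫_ℝ
      = -(κ / (n + 1) * 𝔼 τ, ‖wT τ - h‖ ^ 2) := by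
    rw [expect_comm]
    simp_rw [← fun J : Fin (n + 1) => expect_fin_succ_eq_expect_insertNth J
      fun τ => ⟪u τ J, wT τ - h⟫_ℝ]
    rw [expect_comm]
    have h1 : ∀ τ, 𝔼 J, ⟪u τ J, wT τ - h⟫_ℝ = -(κ / (n + 1) * ‖wT τ - h‖ ^ 2) := fun τ => by
      rw [Fintype.expect_eq_sum_div_card, ← sum_inner, hssum τ, inner_neg_left, inner_smul_left,
        real_inner_self_eq_norm_sq]
      simp
      ring
    simp_rw [h1, expect_neg_distrib, ← mul_expect]
  have hV : n * r + n / (n + 1) * κ * (𝔼 τ, ‖wT τ - h‖ ^ 2)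
      + 𝔼 σ, ⟪wS σ - h, ∑ j, ub (σ j)⟫_ℝ + κ / 2 * 𝔼 σ, ‖wS σ - h‖ ^ 2
      ≤ 𝔼 σ, (∑ j, φ (σ j) ⟪x (σ j), wS σ⟫_ℝ + κ / 2 * ‖wS σ - h‖ ^ 2) := by
    set g : I → ℝ := fun i => 𝔼 J : Fin (n + 1), 𝔼 σ : Fin n → I,
      (φ i ⟪x i, wT (J.insertNth i σ)⟫_ℝ
        - ⟪u (J.insertNth i σ) J, wT (J.insertNth i σ) - h⟫_ℝ) with hg
    have h1 : ∀ i (w : V), g i + ⟪ub i, w - h⟫_ℝ ≤ φ i ⟪x i, w⟫_ℝ := by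
      intro i w
      rw [hub]
      simp_rw [hg, ← expect_add_distrib]
      refine expect_le univ_nonempty fun J _ => expect_le univ_nonempty fun σ _ => ?_
      have := hs (J.insertNth i σ) J ⟪x i, w⟫_ℝ
      simp only [hu, Fin.insertNth_apply_same, inner_smul_left, inner_sub_right, conj_trivial]
        at this ⊢
      linarith
    have h2 : 𝔼 i, g i = r + κ / (n + 1) * 𝔼 τ, ‖wT τ - h‖ ^ 2 := by
      simp_rw [hg, expect_sub_distrib]
      rw [hforce, expect_comm, sub_neg_eq_add]
    have h3 : 𝔼 σ : Fin n → I, ∑ j, g (σ j) = n * (𝔼 i, g i) := by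
      simp_rw [expect_sum_comm, expect_comp_eval _ g]
      simp
    have h4 : 𝔼 σ : Fin n → I, (∑ j, g (σ j) + ⟪wS σ - h, ∑ j, ub (σ j)⟫_ℝ
        + κ / 2 * ‖wS σ - h‖ ^ 2)
        ≤ 𝔼 σ, (∑ j, φ (σ j) ⟪x (σ j), wS σ⟫_ℝ + κ / 2 * ‖wS σ - h‖ ^ 2) := by
      refine expect_le_expect fun σ _ => ?_
      rw [real_inner_comm, sum_inner, ← sum_add_distrib]
      gcongr with j
      exact h1 _ _
    simp_rw [expect_add_distrib, ← mul_expect, h3, h2] at h4 ⊢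
    refine le_trans (le_of_eq ?_) h4
    ring
  have hn' : (0 : ℝ) < n := by exact_mod_cast hn
  set W := 𝔼 σ, (∑ j, φ (σ j) ⟪x (σ j), wS σ⟫_ℝ + κ / 2 * ‖wS σ - h‖ ^ 2) with hW
  have key : κ * (n * Rn) ≤ κ * W + n * (L * R) ^ 2 := by
    nlinarith [mul_le_mul_of_nonneg_left hV hκ.le, mul_le_mul_of_nonneg_left hQle hn'.le]
  have : (n : ℝ)⁻¹ * W + (L * R) ^ 2 / κ = (κ * W + n * (L * R) ^ 2) / (κ * n) := by
    field_simp
  rw [this, le_div_iff₀ (by positivity)]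
  linarith

end LeaveOneOut

section BiasedERM

open Finset
open scoped BigOperators

/-- A data point at which the loss is nonnegative, convex and `L`-Lipschitz and whose input has
norm at most `R`. -/
structure IsRegularPt {d : ℕ} (ℓ : ℝ → ℝ → ℝ) (L R : ℝ) (z : Pt d) : Prop where
  norm_le : ‖z.1‖ ≤ R
  nonneg : ∀ a, 0 ≤ ℓ a z.2
  convex : ConvexOn ℝ Set.univ fun a => ℓ a z.2
  lipschitz : ∀ a b, |ℓ a z.2 - ℓ b z.2| ≤ L * |a - b|

variable {d n : ℕ} {ℓ : ℝ → ℝ → ℝ} {L R lam : ℝ}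

lemma IsRegularPt.abs_loss_sub_le {z : Pt d} (hz : IsRegularPt ℓ L R z) (hL : 0 ≤ L)
    (w w' : Vec d) : |ℓ ⟪z.1, w⟫_ℝ z.2 - ℓ ⟪z.1, w'⟫_ℝ z.2| ≤ L * R * ‖w - w'‖ := by
  refine (hz.lipschitz _ _).trans ?_
  rw [← inner_sub_right, mul_assoc]
  gcongr
  exact (abs_real_inner_le_norm _ _).trans (by gcongr; exact hz.norm_le)

lemma IsRegularPt.continuous_loss {z : Pt d} (hz : IsRegularPt ℓ L R z) :
    Continuous fun w : Vec d => ℓ ⟪z.1, w⟫_ℝ z.2 := by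
  have : Continuous fun a => ℓ a z.2 := by
    simpa [continuousOn_univ] using hz.convex.continuousOn isOpen_univ
  fun_prop

lemma mul_regRisk (hn : 1 ≤ n) (S : Fin n → Pt d) (h w : Vec d) :
    (n : ℝ) * regRisk ℓ lam S h w
      = ∑ k, ℓ ⟪(S k).1, w⟫_ℝ (S k).2 + (lam * n) / 2 * ‖w - h‖ ^ 2 := by
  have : (n : ℝ) ≠ 0 := by positivity
  unfold regRisk empRisk
  field_simp

lemma empRisk_nonneg {S : Fin n → Pt d} (hS : ∀ k, IsRegularPt ℓ L R (S k)) (w : Vec d) :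
    0 ≤ empRisk ℓ S w :=
  mul_nonneg (by positivity) (sum_nonneg fun k _ => (hS k).nonneg _)

/-- Optimality conditions of the biased ERM. -/
lemma regRisk_minimizer_optimality (hn : 1 ≤ n) (hL : 0 ≤ L) {S : Fin n → Pt d}
    (hS : ∀ k, IsRegularPt ℓ L R (S k)) {h e : Vec d}
    (he : ∀ w, regRisk ℓ lam S h e ≤ regRisk ℓ lam S h w) :
    (∀ w, empRisk ℓ S e - lam * ⟪e - h, w - e⟫_ℝ ≤ empRisk ℓ S w)
      ∧ ‖lam • (e - h)‖ ≤ L * R := by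
  have hn' : (0 : ℝ) < n := by exact_mod_cast hn
  obtain ⟨s, hs, hsum⟩ := exists_subgrad_sum_eq (x := fun k => (S k).1)
    (φ := fun k a => ℓ a (S k).2) (fun k => (hS k).convex) (κ := lam * n) (h := h) (w₀ := e)
    (fun w => by
      rw [← mul_regRisk hn, ← mul_regRisk hn]
      exact mul_le_mul_of_nonneg_left (he w) hn'.le)
  constructor
  · intro w
    have h1 : ∑ k, (ℓ ⟪(S k).1, e⟫_ℝ (S k).2 + s k * (⟪(S k).1, w⟫_ℝ - ⟪(S k).1, e⟫_ℝ))
        ≤ ∑ k, ℓ ⟪(S k).1, w⟫_ℝ (S k).2 := sum_le_sum fun k _ => hs k _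
    have h2 : ∑ k, s k * (⟪(S k).1, w⟫_ℝ - ⟪(S k).1, e⟫_ℝ) = -(lam * n * ⟪e - h, w - e⟫_ℝ) := by
      have : ⟪∑ k, s k • (S k).1, w - e⟫_ℝ = -(lam * n * ⟪e - h, w - e⟫_ℝ) := by
        rw [hsum, inner_neg_left, inner_smul_left]; rfl
      rw [← this, sum_inner]
      refine sum_congr rfl fun k _ => ?_
      rw [inner_smul_left, inner_sub_right]; rfl
    rw [sum_add_distrib, h2] at h1
    have h3 := mul_le_mul_of_nonneg_left h1 (inv_nonneg.2 hn'.le)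
    unfold empRisk
    refine le_trans (le_of_eq ?_) h3
    field_simp
    ring
  · have h1 : (n : ℝ) * ‖lam • (e - h)‖ ≤ n * (L * R) := by
      calc (n : ℝ) * ‖lam • (e - h)‖ = ‖∑ k, s k • (S k).1‖ := by
            rw [hsum, norm_neg, mul_comm lam, mul_smul, norm_smul (n : ℝ)]; simp
        _ ≤ ∑ k, ‖s k • (S k).1‖ := norm_sum_le _ _
        _ ≤ ∑ k : Fin n, L * R := by
            refine sum_le_sum fun k _ => ?_
            rw [norm_smul]
            exact mul_le_mul ((hs k).abs_le (hS k).lipschitz) (hS k).norm_le (norm_nonneg _) hL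
        _ = n * (L * R) := by simp
    exact le_of_mul_le_mul_left h1 hn'

lemma regRisk_minimizer_subgradient (hn : 1 ≤ n) (hL : 0 ≤ L) (hlam : 0 ≤ lam)
    {S : Fin n → Pt d} (hS : ∀ k, IsRegularPt ℓ L R (S k)) {h e : Vec d}
    (he : ∀ w, regRisk ℓ lam S h e ≤ regRisk ℓ lam S h w) (h' w : Vec d) :
    regRisk ℓ lam S h e + ⟪(-lam) • (e - h), h' - h⟫_ℝ ≤ regRisk ℓ lam S h' w := by
  have h1 := (regRisk_minimizer_optimality hn hL hS he).1 w
  have h2 : 0 ≤ lam / 2 * ‖(w - h') - (e - h)‖ ^ 2 := by positivity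
  have h3 : ⟪e - h, w - e⟫_ℝ = ⟪e - h, w - h'⟫_ℝ - ‖e - h‖ ^ 2 + ⟪e - h, h' - h⟫_ℝ := by
    rw [← real_inner_self_eq_norm_sq, ← inner_sub_right, ← inner_add_right]
    congr 1
    abel
  rw [norm_sub_sq_real, real_inner_comm] at h2
  rw [h3] at h1
  unfold regRisk
  rw [inner_smul_left]
  simp only [conj_trivial]
  nlinarith

lemma norm_regRisk_minimizer_sub_le (hn : 1 ≤ n) (hL : 0 ≤ L) (hlam : 0 < lam)
    {S : Fin n → Pt d} (hS : ∀ k, IsRegularPt ℓ L R (S k)) {h e h' e' : Vec d}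
    (he : ∀ w, regRisk ℓ lam S h e ≤ regRisk ℓ lam S h w)
    (he' : ∀ w, regRisk ℓ lam S h' e' ≤ regRisk ℓ lam S h' w) : ‖e - e'‖ ≤ ‖h - h'‖ := by
  have h1 := (regRisk_minimizer_optimality hn hL hS he).1 e'
  have h2 := (regRisk_minimizer_optimality hn hL hS he').1 e
  have h3 : lam * (‖e - e'‖ ^ 2 - ⟪h - h', e - e'⟫_ℝ) ≤ lam * 0 := by
    have : ⟪e - h, e' - e⟫_ℝ + ⟪e' - h', e - e'⟫_ℝ = ⟪h - h', e - e'⟫_ℝ - ‖e - e'‖ ^ 2 := by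
      rw [← real_inner_self_eq_norm_sq, ← neg_sub e e', inner_neg_right, neg_add_eq_sub,
        ← inner_sub_left, ← inner_sub_left]
      congr 1
      abel
    nlinarith
  have h4 := le_of_mul_le_mul_left h3 hlam
  have h5 := real_inner_le_norm (h - h') (e - e')
  by_contra! hc
  nlinarith [norm_nonneg (h - h'), norm_nonneg (e - e')]

/-- The leave-one-out bound for the biased ERM computed on `n`-tuples drawn from `N` fixed
regular points. -/
lemma sum_regRisk_gap_le (hn : 1 ≤ n) (hR : 0 ≤ R) (hlam : 0 < lam) {N : ℕ} (hN : 1 ≤ N)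
    {z : Fin N → Pt d} (hz : ∀ i, IsRegularPt ℓ L R (z i)) {h : Vec d}
    {e : (Fin n → Pt d) → Vec d}
    (he : ∀ S w, regRisk ℓ lam S h (e S) ≤ regRisk ℓ lam S h w) :
    ∑ τ : Fin (n + 1) → Fin N,
      (ℓ ⟪(z (τ 0)).1, e (Fin.tail (z ∘ τ))⟫_ℝ (z (τ 0)).2
        - regRisk ℓ lam (Fin.tail (z ∘ τ)) h (e (Fin.tail (z ∘ τ))))
      ≤ (N : ℝ) ^ (n + 1) * ((L * R) ^ 2 / (lam * n)) := by
  have hn' : (0 : ℝ) < n := by exact_mod_cast hn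
  have hN' : (0 : ℝ) < N := by exact_mod_cast hN
  have : Nonempty (Fin N) := ⟨⟨0, hN⟩⟩
  have key := expect_loss_le_expect_objective hn (x := fun i => (z i).1)
    (φ := fun i a => ℓ a (z i).2) (L := L) (R := R) (κ := lam * n) hR (fun i => (hz i).norm_le)
    (fun i => (hz i).convex) (fun i => (hz i).nonneg) (fun i => (hz i).lipschitz)
    (by positivity) h (fun σ => e (z ∘ σ)) (fun σ w => by
      have := mul_le_mul_of_nonneg_left (he (z ∘ σ) w) hn'.le
      rw [mul_regRisk hn, mul_regRisk hn] at this
      exact this)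
  have h1 : ∀ σ : Fin n → Fin N, ∑ j, ℓ ⟪(z (σ j)).1, e (z ∘ σ)⟫_ℝ (z (σ j)).2
      + lam * n / 2 * ‖e (z ∘ σ) - h‖ ^ 2 = n * regRisk ℓ lam (z ∘ σ) h (e (z ∘ σ)) := fun σ => by
    rw [mul_regRisk hn]; rfl
  simp_rw [h1, ← mul_expect] at key
  rw [inv_mul_cancel_left₀ hn'.ne'] at key
  have h2 : 𝔼 τ : Fin (n + 1) → Fin N,
      (ℓ ⟪(z (τ 0)).1, e (Fin.tail (z ∘ τ))⟫_ℝ (z (τ 0)).2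
        - regRisk ℓ lam (Fin.tail (z ∘ τ)) h (e (Fin.tail (z ∘ τ))))
      ≤ (L * R) ^ 2 / (lam * n) := by
    rw [expect_fin_succ_eq_expect_insertNth 0]
    have h3 : ∀ (i : Fin N) (σ : Fin n → Fin N),
        Fin.tail (z ∘ (0 : Fin (n + 1)).insertNth (α := fun _ => Fin N) i σ) = z ∘ σ := by
      intro i σ
      funext j
      simp [Fin.tail]
    simp_rw [h3, expect_sub_distrib, Fintype.expect_const, Fin.insertNth_apply_same]
    linarith
  rw [Fintype.expect_eq_sum_div_card, div_le_iff₀ (by positivity)] at h2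
  refine h2.trans_eq ?_
  simp
  ring

end BiasedERM

section Generalization

open Filter Topology

/-- Restricting an i.i.d. sample to distinct coordinates gives an i.i.d. sample. -/
lemma measurePreserving_comp_injective {Z α β : Type*} [MeasurableSpace Z] [Fintype α] [Fintype β]
    (μ : Measure Z) [IsProbabilityMeasure μ] {τ : α → β} (hτ : Function.Injective τ) :
    MeasurePreserving (fun z : β → Z => z ∘ τ) (Measure.pi fun _ => μ)
      (Measure.pi fun _ => μ) := by
  refine ⟨by fun_prop, ?_⟩
  have h1 := (ProbabilityTheory.iIndepFun_pi (X := fun (_ : β) (x : Z) => x) (μ := fun _ : β => μ)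
    fun i => aemeasurable_id).precomp hτ
  rw [ProbabilityTheory.iIndepFun_iff_map_fun_eq_pi_map
    (fun i => (measurable_pi_apply (τ i)).aemeasurable)] at h1
  refine h1.trans ?_
  congr 1
  funext i
  exact (measurePreserving_eval (fun _ : β => μ) (τ i)).map_eq

variable {d n : ℕ} {ℓ : ℝ → ℝ → ℝ} {L R lam : ℝ} {μ : Measure (Pt d)}

/-- A jointly measurable version of the loss. -/
lemma exists_measurable_loss (hreg : ∀ᵐ z ∂μ, IsRegularPt ℓ L R z)
    (hmeas : ∀ w, AEStronglyMeasurable (fun z : Pt d => ℓ ⟪z.1, w⟫_ℝ z.2) μ) :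
    ∃ F : Vec d → Pt d → ℝ, Measurable (Function.uncurry F)
      ∧ ∀ᵐ z ∂μ, ∀ w, ℓ ⟪z.1, w⟫_ℝ z.2 = F w z := by
  classical
  let D : ℕ → Vec d := TopologicalSpace.denseSeq (Vec d)
  have hae : ∀ᵐ z ∂μ, IsRegularPt ℓ L R z
      ∧ ∀ k, ℓ ⟪z.1, D k⟫_ℝ z.2 = (hmeas (D k)).mk _ z :=
    hreg.and (ae_all_iff.2 fun k => (hmeas (D k)).ae_eq_mk)
  obtain ⟨B, hB, hBm, hB0⟩ := exists_measurable_superset_of_null (mem_ae_iff.1 hae)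
  set Z₀ := Bᶜ with hZ
  have hZ₀ : MeasurableSet Z₀ := hBm.compl
  have hnull : μ Z₀ᶜ = 0 := by rwa [hZ, compl_compl]
  have hsub : ∀ z ∈ Z₀, IsRegularPt ℓ L R z
      ∧ ∀ k, ℓ ⟪z.1, D k⟫_ℝ z.2 = (hmeas (D k)).mk _ z := fun z hz => by
    by_contra hc
    exact hz (hB hc)
  let F : Vec d → Pt d → ℝ := fun w => Z₀.indicator fun z => ℓ ⟪z.1, w⟫_ℝ z.2
  have hcont : ∀ z, Continuous fun w => F w z := by
    intro z
    by_cases hz : z ∈ Z₀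
    · simpa [F, hz] using (hsub z hz).1.continuous_loss
    · simpa [F, hz] using continuous_const
  have hD : ∀ k, Measurable (F (D k)) := by
    intro k
    have : F (D k) = Z₀.indicator ((hmeas (D k)).mk _) :=
      Set.indicator_congr fun z hz => (hsub z hz).2 k
    rw [this]
    exact (hmeas (D k)).stronglyMeasurable_mk.measurable.indicator hZ₀
  refine ⟨F, measurable_uncurry_of_continuous_of_measurable hcont fun w => ?_, ?_⟩
  · obtain ⟨u, hu, hlim⟩ := mem_closure_iff_seq_limit.1
      ((TopologicalSpace.denseRange_denseSeq (Vec d)) w)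
    choose k hk using hu
    refine measurable_of_tendsto_metrizable (f := fun i => F (D (k i))) (fun i => hD _) ?_
    rw [tendsto_pi_nhds]
    intro z
    refine ((hcont z).tendsto w).comp ?_
    convert hlim using 1
    funext i
    exact hk i
  · have : ∀ᵐ z ∂μ, z ∈ Z₀ := mem_ae_iff.2 hnull
    filter_upwards [this] with z hz w
    simp [F, hz]

lemma integral_comp_measurePreserving {Ω Ω' : Type*} [MeasurableSpace Ω] [MeasurableSpace Ω']
    {P : Measure Ω} {Q : Measure Ω'} {f : Ω → Ω'} (hf : MeasurePreserving f P Q) {g : Ω' → ℝ}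
    (hg : Integrable g Q) : ∫ ω, g (f ω) ∂P = ∫ y, g y ∂Q := by
  conv_rhs => rw [← hf.map_eq]
  rw [integral_map hf.aemeasurable (by rw [hf.map_eq]; exact hg.aestronglyMeasurable)]

section EmpRisk

variable {Ω : Type*} [MeasurableSpace Ω] {P : Measure Ω} {f : Fin n → Ω → Pt d}

lemma integrable_empRisk (hint : ∀ w, Integrable (fun z : Pt d => ℓ ⟪z.1, w⟫_ℝ z.2) μ)
    (hf : ∀ k, MeasurePreserving (f k) P μ) (w : Vec d) :
    Integrable (fun ω => empRisk ℓ (fun k => f k ω) w) P :=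
  (integrable_finsetSum _ fun k _ => (hf k).integrable_comp_of_integrable (hint w)).const_mul _

lemma integral_empRisk (hn : 1 ≤ n)
    (hint : ∀ w, Integrable (fun z : Pt d => ℓ ⟪z.1, w⟫_ℝ z.2) μ)
    (hf : ∀ k, MeasurePreserving (f k) P μ) (w : Vec d) :
    ∫ ω, empRisk ℓ (fun k => f k ω) w ∂P = trueRisk ℓ μ w := by
  have hn' : (n : ℝ) ≠ 0 := by positivity
  have h1 : ∀ k, Integrable (fun ω => ℓ ⟪(f k ω).1, w⟫_ℝ (f k ω).2) P := fun k =>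
    (hf k).integrable_comp_of_integrable (hint w)
  unfold empRisk
  rw [integral_const_mul, integral_finsetSum _ fun k _ => h1 k]
  simp only [fun k => integral_comp_measurePreserving (hf k) (hint w)]
  simp [trueRisk, hn']

end EmpRisk

variable [IsProbabilityMeasure μ]

lemma ae_pi_forall {p : Pt d → Prop} (hp : ∀ᵐ z ∂μ, p z) (k : ℕ) :
    ∀ᵐ S ∂(Measure.pi fun _ : Fin k => μ), ∀ j, p (S j) :=
  ae_all_iff.2 fun j => (measurePreserving_eval (fun _ : Fin k => μ) j).quasiMeasurePreserving.ae hp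

variable {h : Vec d} {e : (Fin n → Pt d) → Vec d}

lemma integrable_regRisk_minimizer (hlam : 0 ≤ lam)
    (hreg : ∀ᵐ z ∂μ, IsRegularPt ℓ L R z)
    (hint : ∀ w, Integrable (fun z : Pt d => ℓ ⟪z.1, w⟫_ℝ z.2) μ) (hem : Measurable e)
    (he : ∀ S w, regRisk ℓ lam S h (e S) ≤ regRisk ℓ lam S h w) :
    Integrable (fun S => regRisk ℓ lam S h (e S)) (Measure.pi fun _ : Fin n => μ) := by
  obtain ⟨F, hF, hFae⟩ := exists_measurable_loss hreg fun w => (hint w).aestronglyMeasurable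
  refine (integrable_empRisk hint
    (fun k => measurePreserving_eval (fun _ : Fin n => μ) k) h).mono' ?_ ?_
  · have hm : Measurable fun S : Fin n → Pt d =>
        (n : ℝ)⁻¹ * ∑ k, Function.uncurry F (e S, S k) + lam / 2 * ‖e S - h‖ ^ 2 := by
      have : ∀ k, Measurable fun S : Fin n → Pt d => Function.uncurry F (e S, S k) := fun k =>
        hF.comp (hem.prodMk (measurable_pi_apply k))
      fun_prop
    refine hm.aestronglyMeasurable.congr ?_
    filter_upwards [ae_pi_forall hFae n] with S hS
    simp [regRisk, empRisk, hS]
  · filter_upwards [ae_pi_forall hreg n] with S hS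
    have h1 : 0 ≤ regRisk ℓ lam S h (e S) :=
      add_nonneg (empRisk_nonneg hS _) (by positivity)
    rw [Real.norm_eq_abs, abs_of_nonneg h1]
    exact (he S h).trans_eq (by simp [regRisk])

lemma integrable_loss_minimizer (hn : 1 ≤ n) (hL : 0 ≤ L) (hlam : 0 < lam) (hR : 0 ≤ R)
    (hreg : ∀ᵐ z ∂μ, IsRegularPt ℓ L R z)
    (hint : ∀ w, Integrable (fun z : Pt d => ℓ ⟪z.1, w⟫_ℝ z.2) μ) (hem : Measurable e)
    (he : ∀ S w, regRisk ℓ lam S h (e S) ≤ regRisk ℓ lam S h w) :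
    Integrable (fun ζ : Fin (n + 1) → Pt d => ℓ ⟪(ζ 0).1, e (Fin.tail ζ)⟫_ℝ (ζ 0).2)
      (Measure.pi fun _ : Fin (n + 1) => μ) := by
  obtain ⟨F, hF, hFae⟩ := exists_measurable_loss hreg fun w => (hint w).aestronglyMeasurable
  have h0 := (measurePreserving_eval (fun _ : Fin (n + 1) => μ) 0).integrable_comp_of_integrable
    (hint h)
  refine (h0.norm.add (integrable_const (L * R * (L * R / lam)))).mono' ?_ ?_
  · have hm : Measurable fun ζ : Fin (n + 1) → Pt d =>
        Function.uncurry F (e (Fin.tail ζ), ζ 0) := by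
      refine hF.comp ((hem.comp ?_).prodMk (measurable_pi_apply 0))
      exact measurable_pi_lambda _ fun j => measurable_pi_apply _
    refine hm.aestronglyMeasurable.congr ?_
    filter_upwards [ae_pi_forall hFae (n + 1)] with ζ hζ
    simp [hζ 0]
  · filter_upwards [ae_pi_forall hreg (n + 1)] with ζ hζ
    have h1 := (hζ 0).abs_loss_sub_le hL (e (Fin.tail ζ)) h
    have h2 := (regRisk_minimizer_optimality hn hL (S := Fin.tail ζ) (fun k => hζ k.succ)
      (he (Fin.tail ζ))).2
    rw [norm_smul, Real.norm_eq_abs, abs_of_pos hlam, mul_comm, ← le_div_iff₀ hlam] at h2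
    have h3 : L * R * ‖e (Fin.tail ζ) - h‖ ≤ L * R * (L * R / lam) := by gcongr
    have h4 := abs_sub_abs_le_abs_sub (ℓ ⟪(ζ 0).1, e (Fin.tail ζ)⟫_ℝ (ζ 0).2)
      (ℓ ⟪(ζ 0).1, h⟫_ℝ (ζ 0).2)
    simp only [Real.norm_eq_abs, Function.comp_apply, Function.eval, Pi.add_apply]
    linarith

lemma integral_loss_minimizer (hn : 1 ≤ n) (hL : 0 ≤ L) (hlam : 0 < lam) (hR : 0 ≤ R)
    (hreg : ∀ᵐ z ∂μ, IsRegularPt ℓ L R z)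
    (hint : ∀ w, Integrable (fun z : Pt d => ℓ ⟪z.1, w⟫_ℝ z.2) μ) (hem : Measurable e)
    (he : ∀ S w, regRisk ℓ lam S h (e S) ≤ regRisk ℓ lam S h w) :
    ∫ ζ : Fin (n + 1) → Pt d, ℓ ⟪(ζ 0).1, e (Fin.tail ζ)⟫_ℝ (ζ 0).2
        ∂(Measure.pi fun _ : Fin (n + 1) => μ)
      = ∫ S, trueRisk ℓ μ (e S) ∂(Measure.pi fun _ : Fin n => μ) := by
  have hmp := measurePreserving_piFinSuccAbove (fun _ : Fin (n + 1) => μ) 0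
  have hI := integrable_loss_minimizer hn hL hlam hR hreg hint hem he
  set G : Pt d × (Fin n → Pt d) → ℝ := fun p => ℓ ⟪p.1.1, e p.2⟫_ℝ p.1.2 with hG
  have hcomp : (fun ζ : Fin (n + 1) → Pt d => ℓ ⟪(ζ 0).1, e (Fin.tail ζ)⟫_ℝ (ζ 0).2)
      = G ∘ MeasurableEquiv.piFinSuccAbove (fun _ => Pt d) 0 := by
    funext ζ
    simp [hG, MeasurableEquiv.piFinSuccAbove, Fin.insertNthEquiv]
  rw [hcomp] at hI ⊢
  rw [hmp.integrable_comp_emb (MeasurableEquiv.measurableEmbedding _)] at hI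
  rw [show ∫ ζ, (G ∘ MeasurableEquiv.piFinSuccAbove (fun _ => Pt d) 0) ζ
      ∂(Measure.pi fun _ : Fin (n + 1) => μ) = _ from
    hmp.integral_comp (MeasurableEquiv.measurableEmbedding _) G]
  rw [integral_prod_symm _ hI]
  rfl

/-- Generalization bound for the biased ERM on a single task. -/
lemma integral_trueRisk_minimizer_le (hn : 1 ≤ n) (hL : 0 ≤ L) (hlam : 0 < lam) (hR : 0 ≤ R)
    (hreg : ∀ᵐ z ∂μ, IsRegularPt ℓ L R z)
    (hint : ∀ w, Integrable (fun z : Pt d => ℓ ⟪z.1, w⟫_ℝ z.2) μ) (hem : Measurable e)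
    (he : ∀ S w, regRisk ℓ lam S h (e S) ≤ regRisk ℓ lam S h w) :
    ∫ S, trueRisk ℓ μ (e S) ∂(Measure.pi fun _ : Fin n => μ)
      ≤ ∫ S, regRisk ℓ lam S h (e S) ∂(Measure.pi fun _ : Fin n => μ)
        + (L * R) ^ 2 / (lam * n) := by
  classical
  set c := (L * R) ^ 2 / (lam * n) with hc
  set g : (Fin (n + 1) → Pt d) → ℝ := fun ζ => ℓ ⟪(ζ 0).1, e (Fin.tail ζ)⟫_ℝ (ζ 0).2
    - regRisk ℓ lam (Fin.tail ζ) h (e (Fin.tail ζ)) with hg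
  have htail : MeasurePreserving (fun ζ : Fin (n + 1) → Pt d => ζ ∘ Fin.succ)
      (Measure.pi fun _ => μ) (Measure.pi fun _ => μ) :=
    measurePreserving_comp_injective μ (Fin.succ_injective n)
  have hIr := integrable_regRisk_minimizer hlam.le hreg hint hem he
  have hIl := integrable_loss_minimizer hn hL hlam hR hreg hint hem he
  have hIg : Integrable g (Measure.pi fun _ => μ) :=
    hIl.sub (htail.integrable_comp_of_integrable hIr)
  set G := ∫ ζ, g ζ ∂(Measure.pi fun _ => μ) with hG
  have hGeq : G = ∫ S, trueRisk ℓ μ (e S) ∂(Measure.pi fun _ : Fin n => μ)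
      - ∫ S, regRisk ℓ lam S h (e S) ∂(Measure.pi fun _ : Fin n => μ) := by
    rw [← integral_loss_minimizer hn hL hlam hR hreg hint hem he,
      ← integral_comp_measurePreserving htail hIr]
    exact integral_sub hIl (htail.integrable_comp_of_integrable hIr)
  set C := trueRisk ℓ μ h with hC
  have hfin : ∀ N : ℕ, 1 ≤ N → (N.descFactorial (n + 1) : ℝ) * G
      ≤ (N : ℝ) ^ (n + 1) * c + ((N : ℝ) ^ (n + 1) - N.descFactorial (n + 1)) * C := by
    intro N hN
    set P := (Finset.univ : Finset (Fin (n + 1) → Fin N)).filter Function.Injective with hP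
    set P' := (Finset.univ : Finset (Fin (n + 1) → Fin N)).filter
      (fun τ => ¬ Function.Injective τ) with hP'
    have hcard : (P.card : ℝ) = N.descFactorial (n + 1) := by
      rw [hP, ← Fintype.card_subtype, Fintype.card_congr (Equiv.subtypeInjectiveEquivEmbedding _ _),
        Fintype.card_embedding_eq]
      simp
    have hcard' : (P'.card : ℝ) = (N : ℝ) ^ (n + 1) - N.descFactorial (n + 1) := by
      have := Finset.card_filter_add_card_filter_not
        (s := (Finset.univ : Finset (Fin (n + 1) → Fin N))) Function.Injective
      rw [eq_sub_iff_add_eq', ← hcard]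
      have h2 : P.card + P'.card = N ^ (n + 1) := by
        rw [hP, hP', this]; simp
      exact_mod_cast h2
    have hsplit : ∀ᵐ z ∂(Measure.pi fun _ : Fin N => μ),
        ∑ τ ∈ P, g (z ∘ τ) ≤ (N : ℝ) ^ (n + 1) * c
          + ∑ τ ∈ P', empRisk ℓ (Fin.tail (z ∘ τ)) h := by
      filter_upwards [ae_pi_forall hreg N] with z hz
      have h1 := sum_regRisk_gap_le hn hR hlam hN hz he
      have h2 : ∑ τ ∈ P, g (z ∘ τ) + ∑ τ ∈ P', g (z ∘ τ) = ∑ τ, g (z ∘ τ) :=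
        Finset.sum_filter_add_sum_filter_not _ _ _
      have h3 : -∑ τ ∈ P', empRisk ℓ (Fin.tail (z ∘ τ)) h ≤ ∑ τ ∈ P', g (z ∘ τ) := by
        rw [← Finset.sum_neg_distrib]
        refine Finset.sum_le_sum fun τ _ => ?_
        have h4 := he (Fin.tail (z ∘ τ)) h
        have h5 : regRisk ℓ lam (Fin.tail (z ∘ τ)) h h = empRisk ℓ (Fin.tail (z ∘ τ)) h := by
          simp [regRisk]
        have h6 : 0 ≤ ℓ ⟪((z ∘ τ) 0).1, e (Fin.tail (z ∘ τ))⟫_ℝ ((z ∘ τ) 0).2 :=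
          (hz (τ 0)).nonneg _
        simp only [hg]
        linarith
      have h7 : ∑ τ : Fin (n + 1) → Fin N, g (z ∘ τ) ≤ (N : ℝ) ^ (n + 1) * c := h1
      linarith
    have hIgτ : ∀ τ ∈ P, Integrable (fun z : Fin N → Pt d => g (z ∘ τ))
        (Measure.pi fun _ => μ) := fun τ hτ =>
      (measurePreserving_comp_injective μ (Finset.mem_filter.1 hτ).2).integrable_comp_of_integrable
        hIg
    have hevτ : ∀ (τ : Fin (n + 1) → Fin N) (k : Fin n), MeasurePreserving
        (fun z : Fin N → Pt d => Fin.tail (z ∘ τ) k) (Measure.pi fun _ => μ) μ := fun τ k =>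
      measurePreserving_eval (fun _ : Fin N => μ) (τ k.succ)
    have hIeτ : ∀ τ : Fin (n + 1) → Fin N,
        Integrable (fun z : Fin N → Pt d => empRisk ℓ (Fin.tail (z ∘ τ)) h)
        (Measure.pi fun _ => μ) := fun τ => integrable_empRisk hint (hevτ τ) h
    have hieτ : ∀ τ : Fin (n + 1) → Fin N,
        ∫ z : Fin N → Pt d, empRisk ℓ (Fin.tail (z ∘ τ)) h ∂(Measure.pi fun _ => μ) = C :=
      fun τ => integral_empRisk hn hint (hevτ τ) h
    have hfinal := integral_mono_ae (integrable_finsetSum P hIgτ)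
      ((integrable_const ((N : ℝ) ^ (n + 1) * c)).add
        (integrable_finsetSum P' fun τ _ => hIeτ τ)) hsplit
    simp only [Pi.add_apply] at hfinal
    rw [integral_finsetSum P hIgτ, integral_add (integrable_const _)
      (integrable_finsetSum P' fun τ _ => hIeτ τ),
      integral_finsetSum P' fun τ _ => hIeτ τ] at hfinal
    have hgτ : ∀ τ ∈ P, ∫ z : Fin N → Pt d, g (z ∘ τ) ∂(Measure.pi fun _ => μ) = G :=
      fun τ hτ => integral_comp_measurePreserving
        (measurePreserving_comp_injective μ (Finset.mem_filter.1 hτ).2) hIg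
    rw [Finset.sum_congr rfl hgτ, Finset.sum_congr rfl fun τ _ => hieτ τ] at hfinal
    simp only [Finset.sum_const, nsmul_eq_mul, hcard, hcard', integral_const, probReal_univ,
      smul_eq_mul, one_mul] at hfinal
    exact hfinal
  have hratio : Tendsto (fun N : ℕ => (N.descFactorial (n + 1) : ℝ) / (N : ℝ) ^ (n + 1)) atTop
      (𝓝 1) := by
    refine (Asymptotics.isEquivalent_iff_tendsto_one ?_).1 (isEquivalent_descFactorial (n + 1))
    filter_upwards [eventually_ge_atTop 1] with N hN
    have : (N : ℝ) ≠ 0 := by positivity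
    exact pow_ne_zero _ this
  have hlim : G ≤ c := by
    have h1 : Tendsto (fun N : ℕ => (N.descFactorial (n + 1) : ℝ) / (N : ℝ) ^ (n + 1) * G) atTop
        (𝓝 (1 * G)) := hratio.mul_const G
    have h2 : Tendsto (fun N : ℕ => c
        + (1 - (N.descFactorial (n + 1) : ℝ) / (N : ℝ) ^ (n + 1)) * C) atTop
        (𝓝 (c + (1 - 1) * C)) := (hratio.const_sub 1).mul_const C |>.const_add c
    have h3 := le_of_tendsto_of_tendsto h1 h2 (by
      filter_upwards [eventually_ge_atTop 1] with N hN
      have hN' : (0 : ℝ) < (N : ℝ) ^ (n + 1) := by positivity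
      have h4 := hfin N hN
      have e1 : (N.descFactorial (n + 1) : ℝ) / (N : ℝ) ^ (n + 1) * G
          = (N.descFactorial (n + 1) * G) / (N : ℝ) ^ (n + 1) := by ring
      have e2 : c + (1 - (N.descFactorial (n + 1) : ℝ) / (N : ℝ) ^ (n + 1)) * C
          = ((N : ℝ) ^ (n + 1) * c + ((N : ℝ) ^ (n + 1) - N.descFactorial (n + 1)) * C)
            / (N : ℝ) ^ (n + 1) := by field_simp
      rw [e1, e2]
      gcongr)
    linarith
  linarith

end Generalization

section MetaSGD

open Filter Topology

variable {V : Type*} [NormedAddCommGroup V] [InnerProductSpace ℝ V]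

/-- A monotone operator which is nonexpansive on a dense set is nonexpansive. -/
lemma nonexpansive_of_monotone_of_dense [CompleteSpace V] {E : V → V} {D : Set V} (hD : Dense D)
    (hmono : ∀ a b, 0 ≤ ⟪E a - E b, a - b⟫_ℝ)
    (hE : ∀ a ∈ D, ∀ b ∈ D, ‖E a - E b‖ ≤ ‖a - b‖) (a b : V) : ‖E a - E b‖ ≤ ‖a - b‖ := by
  have key : ∀ a, ∀ b ∈ D, ‖E a - E b‖ ≤ ‖a - b‖ := by
    intro a
    obtain ⟨u, huD, hu⟩ := mem_closure_iff_seq_limit.1 (hD a)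
    have hcau : CauchySeq fun k => E (u k) := by
      refine Metric.cauchySeq_iff.2 fun ε hε => ?_
      obtain ⟨N, hN⟩ := Metric.cauchySeq_iff.1 hu.cauchySeq ε hε
      refine ⟨N, fun i hi j hj => lt_of_le_of_lt ?_ (hN i hi j hj)⟩
      rw [dist_eq_norm, dist_eq_norm]
      exact hE _ (huD i) _ (huD j)
    obtain ⟨y, hy⟩ := cauchySeq_tendsto_of_complete hcau
    have hyD : ∀ b ∈ D, ‖y - E b‖ ≤ ‖a - b‖ := fun b hb =>
      le_of_tendsto_of_tendsto' (hy.sub_const (E b)).norm (hu.sub_const b).norm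
        fun k => hE _ (huD k) _ hb
    have hineq : ∀ b ∈ closure D, 0 ≤ ⟪E a - y, a - b⟫_ℝ + ‖a - b‖ ^ 2 := by
      refine fun b hb => closure_minimal (s := D)
        (t := {b | 0 ≤ ⟪E a - y, a - b⟫_ℝ + ‖a - b‖ ^ 2}) (fun b hb => ?_)
        (isClosed_le continuous_const (by fun_prop)) hb
      have h1 := hmono a b
      have h2 : ⟪E a - E b, a - b⟫_ℝ = ⟪E a - y, a - b⟫_ℝ + ⟪y - E b, a - b⟫_ℝ := by
        rw [← inner_add_left, sub_add_sub_cancel]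
      have h3 := (real_inner_le_norm (y - E b) (a - b)).trans
        (mul_le_mul_of_nonneg_right (hyD b hb) (norm_nonneg _))
      simp only [Set.mem_ofPred_eq]
      nlinarith
    have hEy : E a = y := by
      have h1 := hineq (a + (1 / 2 : ℝ) • (E a - y)) (hD _)
      rw [sub_add_cancel_left, norm_neg, inner_neg_right, inner_smul_right, norm_smul,
        real_inner_self_eq_norm_sq, mul_pow] at h1
      norm_num at h1
      have h2 : ‖E a - y‖ ^ 2 ≤ 0 := by linarith
      have h3 : ‖E a - y‖ = 0 := by nlinarith [norm_nonneg (E a - y)]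
      exact sub_eq_zero.1 (norm_eq_zero.1 h3)
    rw [hEy]
    exact hyD
  refine le_of_forall_pos_le_add fun ε hε => ?_
  obtain ⟨c, hcD, hc⟩ := hD.exists_dist_lt b (half_pos hε)
  rw [dist_eq_norm] at hc
  have h1 := key a c hcD
  have h2 := key b c hcD
  have h3 : ‖E a - E b‖ ≤ ‖E a - E c‖ + ‖E b - E c‖ := by
    rw [← sub_sub_sub_cancel_right (E a) (E b) (E c)]
    exact norm_sub_le _ _
  have h4 : ‖a - c‖ ≤ ‖a - b‖ + ‖b - c‖ := norm_sub_le_norm_sub_add_norm_sub _ _ _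
  linarith

/-- Integration of a bounded function against a mixture of probability measures. -/
lemma integrable_integral_bind {Θ Ω : Type*} [MeasurableSpace Θ] [MeasurableSpace Ω]
    {ρ : Measure Θ} [IsProbabilityMeasure ρ] {κ : Θ → Measure Ω} (hκ : AEMeasurable κ ρ)
    (hprob : ∀ θ, IsProbabilityMeasure (κ θ)) {ψ : Ω → ℝ} (hψ : Measurable ψ) {B : ℝ}
    (hB : ∀ x, |ψ x| ≤ B) :
    Integrable (fun θ => ∫ x, ψ x ∂κ θ) ρ
      ∧ ∫ θ, ∫ x, ψ x ∂κ θ ∂ρ = ∫ x, ψ x ∂(ρ.bind κ) := by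
  have hbind : IsProbabilityMeasure (ρ.bind κ) :=
    ⟨by simp [Measure.bind_apply MeasurableSet.univ hκ]⟩
  have hint : ∀ (P : Measure Ω) [IsProbabilityMeasure P], Integrable ψ P := fun P _ =>
    (integrable_const B).mono' hψ.aestronglyMeasurable (ae_of_all _ hB)
  have hm : Measurable fun x => ENNReal.ofReal (ψ x + B) := by fun_prop
  have hrepr : ∀ (P : Measure Ω) [IsProbabilityMeasure P],
      ∫ x, ψ x ∂P = (∫⁻ x, ENNReal.ofReal (ψ x + B) ∂P).toReal - B := by
    intro P _
    rw [← integral_eq_lintegral_of_nonneg_ae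
      (ae_of_all _ fun x => by have := neg_le_of_abs_le (hB x); simp; linarith)
      (by fun_prop), integral_add (hint P) (integrable_const B)]
    simp
  have hfin : ∀ (P : Measure Ω) [IsProbabilityMeasure P],
      ∫⁻ x, ENNReal.ofReal (ψ x + B) ∂P < ⊤ := fun P _ =>
    ((hint P).add (integrable_const B)).lintegral_lt_top
  have haem : AEMeasurable (fun θ => ∫⁻ x, ENNReal.ofReal (ψ x + B) ∂κ θ) ρ :=
    (Measure.measurable_lintegral hm).comp_aemeasurable hκ
  have hI : Integrable (fun θ => ∫ x, ψ x ∂κ θ) ρ := by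
    refine (integrable_const B).mono' ?_ (ae_of_all _ fun θ => ?_)
    · simp only [hrepr]
      exact (haem.ennreal_toReal.sub_const B).aestronglyMeasurable
    · have := norm_integral_le_of_norm_le_const (μ := κ θ) (f := ψ) (ae_of_all _ hB)
      simpa using this
  refine ⟨hI, ?_⟩
  rw [hrepr (ρ.bind κ), Measure.lintegral_bind hκ hm.aemeasurable,
    ← integral_toReal haem (ae_of_all _ fun θ => hfin (κ θ))]
  simp only [hrepr]
  rw [integral_sub _ (integrable_const B)]
  · simp
  · have := hI.add (integrable_const B)
    refine this.congr (ae_of_all _ fun θ => ?_)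
    simp [hrepr]

/-- Resampling one coordinate of an i.i.d. sample. -/
lemma measurePreserving_update {ι X : Type*} [Fintype ι] [DecidableEq ι] [MeasurableSpace X]
    (ν : Measure X) [IsProbabilityMeasure ν] (t : ι) :
    MeasurePreserving (fun p : (ι → X) × X => Function.update p.1 t p.2)
      ((Measure.pi fun _ => ν).prod ν) (Measure.pi fun _ => ν) := by
  have hm : Measurable fun p : (ι → X) × X => Function.update p.1 t p.2 := measurable_update'
  refine ⟨hm, (Measure.pi_eq fun s hs => ?_).symm⟩
  have hpre : (fun p : (ι → X) × X => Function.update p.1 t p.2) ⁻¹' Set.univ.pi s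
      = (Set.univ.pi (Function.update s t Set.univ)) ×ˢ s t := by
    ext p
    simp only [Set.mem_preimage, Set.mem_univ_pi, Set.mem_prod]
    constructor
    · intro h
      refine ⟨fun i => ?_, by simpa using h t⟩
      by_cases hi : i = t
      · subst hi; simp
      · simpa [hi] using h i
    · rintro ⟨h1, h2⟩ i
      by_cases hi : i = t
      · subst hi; simpa using h2
      · simpa [hi] using h1 i
  rw [Measure.map_apply hm (MeasurableSet.univ_pi hs), hpre, Measure.prod_prod, Measure.pi_pi,
    ← Finset.mul_prod_erase _ _ (Finset.mem_univ t),
    ← Finset.mul_prod_erase _ (fun i => ν (s i)) (Finset.mem_univ t)]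
  simp only [Function.update_self, measure_univ, one_mul]
  rw [mul_comm]
  congr 1
  refine Finset.prod_congr rfl fun i hi => ?_
  rw [Function.update_of_ne (Finset.ne_of_mem_erase hi)]

variable {X : Type*} {T : ℕ} {G : V → X → V} {γ C : ℝ}

/-- Iterates of stochastic gradient descent with gradient oracle `G`, started at the origin. -/
def sgdIter (G : V → X → V) (γ : ℝ) (ω : Fin T → X) : ℕ → V
  | 0 => 0
  | t + 1 => if ht : t < T then sgdIter G γ ω t - γ • G (sgdIter G γ ω t) (ω ⟨t, ht⟩)
      else sgdIter G γ ω t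

lemma sgdIter_succ (ω : Fin T → X) (t : Fin T) :
    sgdIter G γ ω (t + 1) = sgdIter G γ ω t - γ • G (sgdIter G γ ω t) (ω t) := by
  simp [sgdIter]

lemma sgdIter_update [DecidableEq (Fin T)] (ω : Fin T → X) (t : Fin T) (x : X) {s : ℕ}
    (hs : s ≤ t) :
    sgdIter G γ (Function.update ω t x) s = sgdIter G γ ω s := by
  induction s with
  | zero => rfl
  | succ s ih =>
    have hst : (⟨s, by omega⟩ : Fin T) ≠ t := fun h => by
      have := congrArg Fin.val h
      simp at this
      omega
    rw [sgdIter_succ _ ⟨s, by omega⟩, sgdIter_succ _ ⟨s, by omega⟩, Function.update_of_ne hst]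
    simp only [ih (by omega)]

lemma norm_sgdIter_le (hγ : 0 ≤ γ) (hC : ∀ h x, ‖G h x‖ ≤ C) (ω : Fin T → X) {s : ℕ}
    (hs : s ≤ T) : ‖sgdIter G γ ω s‖ ≤ s * (γ * C) := by
  induction s with
  | zero => simp [sgdIter]
  | succ s ih =>
    rw [sgdIter_succ ω ⟨s, hs⟩]
    refine (norm_sub_le _ _).trans ?_
    rw [norm_smul, Real.norm_eq_abs, abs_of_nonneg hγ]
    have h1 := ih (by omega)
    have h2 := mul_le_mul_of_nonneg_left (hC (sgdIter G γ ω s) (ω ⟨s, hs⟩)) hγ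
    push_cast
    linarith

lemma sum_inner_sgdIter_le (hγ : 0 < γ) (hC : ∀ h x, ‖G h x‖ ≤ C) (m : V) (ω : Fin T → X) :
    ∑ t : Fin T, ⟪G (sgdIter G γ ω t) (ω t), sgdIter G γ ω t - m⟫_ℝ
      ≤ ‖m‖ ^ 2 / (2 * γ) + γ * T * C ^ 2 / 2 := by
  set D : ℕ → ℝ := fun t => ‖sgdIter G γ ω t - m‖ ^ 2 with hD
  have hstep : ∀ t : Fin T, ⟪G (sgdIter G γ ω t) (ω t), sgdIter G γ ω t - m⟫_ℝ
      ≤ (2 * γ)⁻¹ * (D t - D (t + 1)) + γ * C ^ 2 / 2 := by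
    intro t
    have h1 : D (t + 1) = D t - 2 * (γ * ⟪G (sgdIter G γ ω t) (ω t), sgdIter G γ ω t - m⟫_ℝ)
        + γ ^ 2 * ‖G (sgdIter G γ ω t) (ω t)‖ ^ 2 := by
      simp only [hD]
      rw [sgdIter_succ, sub_right_comm, norm_sub_sq_real, inner_smul_right, real_inner_comm,
        norm_smul, mul_pow, Real.norm_eq_abs, sq_abs]
    have h2 : ‖G (sgdIter G γ ω t) (ω t)‖ ^ 2 ≤ C ^ 2 := by
      gcongr
      exact hC _ _
    have h3 : γ ^ 2 * ‖G (sgdIter G γ ω t) (ω t)‖ ^ 2 ≤ γ ^ 2 * C ^ 2 := by gcongr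
    rw [inv_mul_eq_div, ← sub_le_iff_le_add, le_div_iff₀ (by positivity)]
    nlinarith
  refine (Finset.sum_le_sum fun t _ => hstep t).trans ?_
  rw [Finset.sum_add_distrib, ← Finset.mul_sum,
    Fin.sum_univ_eq_sum_range (fun t => D t - D (t + 1)) T, Finset.sum_range_sub']
  have h0 : D 0 = ‖m‖ ^ 2 := by simp [hD, sgdIter]
  have hT : 0 ≤ D T := by positivity
  have h4 : (2 * γ)⁻¹ * (D 0 - D T) ≤ (2 * γ)⁻¹ * ‖m‖ ^ 2 := by
    gcongr
    linarith
  simp only [Finset.sum_const, Finset.card_univ, Fintype.card_fin, nsmul_eq_mul]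
  rw [inv_mul_eq_div _ (‖m‖ ^ 2)] at h4
  linarith

variable [MeasurableSpace V] [BorelSpace V] [SecondCountableTopology V] [MeasurableSpace X]

lemma measurable_sgdIter (hG : Measurable (Function.uncurry G)) (t : ℕ) :
    Measurable fun ω : Fin T → X => sgdIter G γ ω t := by
  induction t with
  | zero => exact measurable_const
  | succ t ih =>
    by_cases ht : t < T
    · simp only [sgdIter, ht, dite_true]
      exact ih.sub ((hG.comp (ih.prodMk (measurable_pi_apply _))).const_smul γ)
    · simpa [sgdIter, ht] using ih

/-- Expected regret of stochastic gradient descent. -/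
lemma sum_integral_sgdIter_le (ν : Measure X) [IsProbabilityMeasure ν] (hγ : 0 < γ)
    (hG : Measurable (Function.uncurry G)) (hC : ∀ h x, ‖G h x‖ ≤ C) (m : V) :
    (∀ t : Fin T, Integrable (fun ω : Fin T → X =>
        ∫ x, ⟪G (sgdIter G γ ω t) x, sgdIter G γ ω t - m⟫_ℝ ∂ν) (Measure.pi fun _ => ν))
      ∧ ∑ t : Fin T, ∫ ω : Fin T → X, ∫ x, ⟪G (sgdIter G γ ω t) x, sgdIter G γ ω t - m⟫_ℝ ∂ν
          ∂(Measure.pi fun _ => ν) ≤ ‖m‖ ^ 2 / (2 * γ) + γ * T * C ^ 2 / 2 := by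
  classical
  have hmp := fun t : Fin T => measurePreserving_update (ι := Fin T) ν t
  set Ψ : Fin T → (Fin T → X) → ℝ := fun t ω =>
    ⟪G (sgdIter G γ ω t) (ω t), sgdIter G γ ω t - m⟫_ℝ with hΨ
  have hΨI : ∀ t, Integrable (Ψ t) (Measure.pi fun _ => ν) := by
    intro t
    have hi := measurable_sgdIter (T := T) (γ := γ) hG t
    refine (integrable_const (C * (t * (γ * C) + ‖m‖))).mono' ?_ (ae_of_all _ fun ω => ?_)
    · exact ((hG.comp (hi.prodMk (measurable_pi_apply t))).inner
        (hi.sub_const m)).aestronglyMeasurable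
    · refine (norm_inner_le_norm _ _).trans ?_
      have h0 : 0 ≤ C := (norm_nonneg _).trans (hC 0 (ω t))
      refine mul_le_mul (hC _ _) ((norm_sub_le _ _).trans ?_) (norm_nonneg _) h0
      gcongr
      exact norm_sgdIter_le hγ.le hC ω t.2.le
  have hcomp : ∀ t (p : (Fin T → X) × X), Ψ t (Function.update p.1 t p.2)
      = ⟪G (sgdIter G γ p.1 t) p.2, sgdIter G γ p.1 t - m⟫_ℝ := by
    intro t p
    simp [hΨ, sgdIter_update p.1 t p.2 le_rfl]
  have hprod : ∀ t : Fin T, Integrable (fun p : (Fin T → X) × X =>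
      ⟪G (sgdIter G γ p.1 t) p.2, sgdIter G γ p.1 t - m⟫_ℝ)
      ((Measure.pi fun _ => ν).prod ν) := fun t => by
    have := (hmp t).integrable_comp_of_integrable (hΨI t)
    exact this.congr (ae_of_all _ fun p => hcomp t p)
  refine ⟨fun t => (hprod t).integral_prod_left, ?_⟩
  have heq : ∀ t : Fin T, ∫ ω : Fin T → X,
      ∫ x, ⟪G (sgdIter G γ ω t) x, sgdIter G γ ω t - m⟫_ℝ ∂ν ∂(Measure.pi fun _ => ν)
      = ∫ ω, Ψ t ω ∂(Measure.pi fun _ => ν) := by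
    intro t
    rw [← integral_comp_measurePreserving (hmp t) (hΨI t), ← integral_prod _ (hprod t)]
    simp only [hcomp]
  rw [Finset.sum_congr rfl fun t _ => heq t, ← integral_finsetSum _ fun t _ => hΨI t]
  have := integral_mono (integrable_finsetSum Finset.univ fun t _ => hΨI t)
    (integrable_const (‖m‖ ^ 2 / (2 * γ) + γ * T * C ^ 2 / 2))
    (fun ω => sum_inner_sgdIter_le hγ hC m ω)
  simpa using this

end MetaSGD

section TransferRisk

variable {d n : ℕ} {ℓ : ℝ → ℝ → ℝ} {L R lam : ℝ} {erm : Vec d → (Fin n → Pt d) → Vec d}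

lemma inner_minimizer_sub_nonneg (hlam : 0 < lam) (S : Fin n → Pt d) {h h' e e' : Vec d}
    (he : ∀ w, regRisk ℓ lam S h e ≤ regRisk ℓ lam S h w)
    (he' : ∀ w, regRisk ℓ lam S h' e' ≤ regRisk ℓ lam S h' w) :
    0 ≤ ⟪e - e', h - h'⟫_ℝ := by
  have h1 := he e'
  have h2 := he' e
  unfold regRisk at h1 h2
  have h3 : lam / 2 * (‖e - h‖ ^ 2 + ‖e' - h'‖ ^ 2) ≤ lam / 2 * (‖e' - h‖ ^ 2 + ‖e - h'‖ ^ 2) := by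
    linarith
  have h4 := le_of_mul_le_mul_left h3 (half_pos hlam)
  simp only [norm_sub_sq_real] at h4
  simp only [inner_sub_left, inner_sub_right]
  linarith

/-- Outside a measurable set of irregular datasets the biased ERM is continuous in the bias and the
meta-gradients are bounded. -/
lemma exists_measurableSet_continuous_minimizer (hn : 1 ≤ n) (hL : 0 ≤ L) (hlam : 0 < lam)
    (hem : ∀ h, Measurable (erm h))
    (he : ∀ h S w, regRisk ℓ lam S h (erm h S) ≤ regRisk ℓ lam S h w) :
    ∃ A : Set (Fin n → Pt d), MeasurableSet A ∧ (∀ S, (∀ k, IsRegularPt ℓ L R (S k)) → S ∈ A)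
      ∧ ∀ S ∈ A, Continuous (fun h => erm h S) ∧ ∀ h, ‖lam • (erm h S - h)‖ ≤ L * R := by
  let D : ℕ → Vec d := TopologicalSpace.denseSeq (Vec d)
  have hD : DenseRange D := TopologicalSpace.denseRange_denseSeq _
  refine ⟨(⋂ i, ⋂ j, {S | ‖erm (D i) S - erm (D j) S‖ ≤ ‖D i - D j‖})
    ∩ ⋂ i, {S | ‖lam • (erm (D i) S - D i)‖ ≤ L * R}, ?_, ?_, ?_⟩
  · refine (MeasurableSet.iInter fun i => MeasurableSet.iInter fun j => ?_).inter
      (MeasurableSet.iInter fun i => ?_)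
    · have hmeas : Measurable fun S => ‖erm (D i) S - erm (D j) S‖ :=
        ((hem (D i)).sub (hem (D j))).norm
      exact hmeas measurableSet_Iic
    · have hmeas : Measurable fun S => ‖lam • (erm (D i) S - D i)‖ :=
        (((hem (D i)).sub_const (D i)).const_smul lam).norm
      exact hmeas measurableSet_Iic
  · intro S hS
    simp only [Set.mem_inter_iff, Set.mem_iInter, Set.mem_ofPred_eq]
    exact ⟨fun i j => norm_regRisk_minimizer_sub_le hn hL hlam hS (he (D i) S) (he (D j) S),
      fun i => (regRisk_minimizer_optimality hn hL hS (he (D i) S)).2⟩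
  · intro S hS
    simp only [Set.mem_inter_iff, Set.mem_iInter, Set.mem_ofPred_eq] at hS
    have hne := nonexpansive_of_monotone_of_dense (E := fun h => erm h S) hD
      (fun a b => inner_minimizer_sub_nonneg hlam S (he a S) (he b S))
      (by rintro _ ⟨i, rfl⟩ _ ⟨j, rfl⟩; exact hS.1 i j)
    have hcont : Continuous fun h => erm h S :=
      (LipschitzWith.of_dist_le_mul (K := 1) fun a b => by
        simpa [dist_eq_norm] using hne a b).continuous
    refine ⟨hcont, fun h => ?_⟩
    have hclosed : IsClosed {h | ‖lam • (erm h S - h)‖ ≤ L * R} :=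
      isClosed_le (by fun_prop) continuous_const
    exact closure_minimal (by rintro _ ⟨i, rfl⟩; exact hS.2 i) hclosed (hD h)

variable {T : ℕ}

lemma regRisk_average_le (hn : 1 ≤ n) (hL : 0 ≤ L) (hlam : 0 < lam) (hT : 1 ≤ T)
    (he : ∀ h S w, regRisk ℓ lam S h (erm h S) ≤ regRisk ℓ lam S h w) {S : Fin n → Pt d}
    (hS : ∀ k, IsRegularPt ℓ L R (S k)) (u : Fin T → Vec d) {hbar : Vec d}
    (hbar_eq : hbar = (T : ℝ)⁻¹ • ∑ t, u t) (m w : Vec d) :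
    regRisk ℓ lam S hbar (erm hbar S)
      ≤ regRisk ℓ lam S m w
        + (T : ℝ)⁻¹ * ∑ t, ⟪(-lam) • (erm (u t) S - u t), u t - m⟫_ℝ := by
  have hT' : (0 : ℝ) < T := by exact_mod_cast hT
  have hstep : ∀ t, regRisk ℓ lam S hbar (erm hbar S)
      + ⟪(-lam) • (erm hbar S - hbar), u t - hbar⟫_ℝ
      ≤ regRisk ℓ lam S m w + ⟪(-lam) • (erm (u t) S - u t), u t - m⟫_ℝ := by
    intro t
    have h1 := regRisk_minimizer_subgradient hn hL hlam.le hS (he hbar S) (u t) (erm (u t) S)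
    have h2 := regRisk_minimizer_subgradient hn hL hlam.le hS (he (u t) S) m w
    rw [← neg_sub (u t) m, inner_neg_right] at h2
    linarith
  have hsum := Finset.sum_le_sum fun t (_ : t ∈ Finset.univ) => hstep t
  have hzero : ∑ t, (u t - hbar) = 0 := by
    rw [Finset.sum_sub_distrib, Finset.sum_const, Finset.card_univ, Fintype.card_fin, hbar_eq,
      ← Nat.cast_smul_eq_nsmul ℝ, smul_inv_smul₀ hT'.ne', sub_self]
  rw [Finset.sum_add_distrib, Finset.sum_add_distrib, ← inner_sum, hzero, inner_zero_right] at hsum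
  simp only [Finset.sum_const, Finset.card_univ, Fintype.card_fin, nsmul_eq_mul, add_zero] at hsum
  have := mul_le_mul_of_nonneg_left hsum (inv_nonneg.2 hT'.le)
  rw [mul_add, inv_mul_cancel_left₀ hT'.ne', inv_mul_cancel_left₀ hT'.ne'] at this
  exact this

/-- Excess risk on a single task of the biased ERM with an averaged bias. -/
lemma integral_trueRisk_average_le (hn : 1 ≤ n) (hL : 0 ≤ L) (hlam : 0 < lam) (hR : 0 ≤ R)
    (hT : 1 ≤ T) {μ : Measure (Pt d)} [IsProbabilityMeasure μ]
    (hreg : ∀ᵐ z ∂μ, IsRegularPt ℓ L R z)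
    (hint : ∀ w, Integrable (fun z : Pt d => ℓ ⟪z.1, w⟫_ℝ z.2) μ)
    (hem : ∀ h, Measurable (erm h))
    (he : ∀ h S w, regRisk ℓ lam S h (erm h S) ≤ regRisk ℓ lam S h w)
    {G : Vec d → (Fin n → Pt d) → Vec d} (hGm : ∀ h, Measurable (G h)) {C : ℝ}
    (hGC : ∀ h S, ‖G h S‖ ≤ C)
    (hG : ∀ S, (∀ k, IsRegularPt ℓ L R (S k)) → ∀ h, G h S = (-lam) • (erm h S - h))
    (u : Fin T → Vec d) (m w : Vec d) :
    ∫ S, trueRisk ℓ μ (erm ((T : ℝ)⁻¹ • ∑ t, u t) S) ∂(Measure.pi fun _ : Fin n => μ)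
      ≤ trueRisk ℓ μ w + lam / 2 * ‖w - m‖ ^ 2
        + (T : ℝ)⁻¹ * ∑ t, ∫ S, ⟪G (u t) S, u t - m⟫_ℝ ∂(Measure.pi fun _ : Fin n => μ)
        + (L * R) ^ 2 / (lam * n) := by
  set hbar := (T : ℝ)⁻¹ • ∑ t, u t with hbar_eq
  refine (integral_trueRisk_minimizer_le hn hL hlam hR hreg hint (hem hbar) (he hbar)).trans ?_
  gcongr
  have hev : ∀ k, MeasurePreserving (fun S : Fin n → Pt d => S k) (Measure.pi fun _ => μ) μ :=
    fun k => measurePreserving_eval (fun _ : Fin n => μ) k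
  have hI1 := integrable_empRisk hint hev w
  have hI2 : ∀ t, Integrable (fun S => ⟪G (u t) S, u t - m⟫_ℝ)
      (Measure.pi fun _ : Fin n => μ) := fun t =>
    (integrable_const (C * ‖u t - m‖)).mono' ((hGm _).inner_const).aestronglyMeasurable
      (ae_of_all _ fun S => (norm_inner_le_norm _ _).trans
        (mul_le_mul_of_nonneg_right (hGC _ _) (norm_nonneg _)))
  have hI12 : Integrable (fun S => empRisk ℓ (fun k => S k) w + lam / 2 * ‖w - m‖ ^ 2)
      (Measure.pi fun _ : Fin n => μ) := hI1.add (integrable_const _)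
  have hI3 : Integrable (fun S => (T : ℝ)⁻¹ * ∑ t, ⟪G (u t) S, u t - m⟫_ℝ)
      (Measure.pi fun _ : Fin n => μ) :=
    (integrable_finsetSum _ fun t _ => hI2 t).const_mul _
  refine (integral_mono_ae
    (integrable_regRisk_minimizer hlam.le hreg hint (hem hbar) (he hbar)) (hI12.add hI3)
    ?_).trans_eq ?_
  · filter_upwards [ae_pi_forall hreg n] with S hS
    have := regRisk_average_le hn hL hlam hT he hS u hbar_eq m w
    simp only [Pi.add_apply, hG S hS]
    exact this
  · simp only [Pi.add_apply]
    rw [integral_add hI12 hI3, integral_add hI1 (integrable_const _), integral_const_mul (T : ℝ)⁻¹,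
      integral_finsetSum _ fun t _ => hI2 t, integral_empRisk hn hint hev]
    simp

lemma aemeasurable_of_bind_ne_zero {Θ Ω : Type*} [MeasurableSpace Θ] [MeasurableSpace Ω]
    {ρ : Measure Θ} {κ : Θ → Measure Ω} (h : ρ.bind κ ≠ 0) : AEMeasurable κ ρ := by
  by_contra hc
  exact h (by rw [Measure.bind, Measure.map_of_not_aemeasurable hc, Measure.join_zero])

end TransferRisk

/-- Excess transfer risk for the bias estimated by exact-gradient
meta-SGD, for the biased ERM family: with `γ = ‖m‖/(LR√T)` and `λ = RL/(Var_m√n)`,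
`E[E_n(w_{h̄_T})] - E_ρ ≤ 2RL·Var_m·n^{-1/2} + ‖m‖LR·T^{-1/2}`. -/
theorem stmt19
    (d n T : ℕ) (hd : 1 ≤ d) (hn : 1 ≤ n) (hT : 1 ≤ T)
    (R L : ℝ) (hR : 0 < R) (hL : 0 < L)
    (Y : Set ℝ) (ℓ : ℝ → ℝ → ℝ)
    (hℓ0 : ∀ a y, y ∈ Y → 0 ≤ ℓ a y)
    (hℓconv : ∀ y ∈ Y, ConvexOn ℝ Set.univ fun a => ℓ a y)
    (hℓlip : ∀ y ∈ Y, ∀ a b, |ℓ a y - ℓ b y| ≤ L * |a - b|)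
    -- the environment of tasks
    (Θ : Type*) [MeasurableSpace Θ]
    (ρ : Measure Θ) [IsProbabilityMeasure ρ]
    (task : Θ → Measure (Pt d))
    (htaskprob : ∀ θ, IsProbabilityMeasure (task θ))
    [hsig : ∀ θ, SigmaFinite (task θ)]
    (htaskY : ∀ θ, ∀ᵐ z ∂(task θ), z.2 ∈ Y)
    (htaskR : ∀ θ, ∀ᵐ z ∂(task θ), ‖z.1‖ ≤ R)
    (hlossInt : ∀ θ w, Integrable (fun z : Pt d => ℓ (⟪z.1, w⟫_ℝ) (z.2)) (task θ))
    -- each task has a minimal-norm minimizer of the true risk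
    (wstar : Θ → Vec d)
    (hwmin : ∀ θ w, trueRisk ℓ (task θ) (wstar θ) ≤ trueRisk ℓ (task θ) w)
    (hwnorm : ∀ θ w, trueRisk ℓ (task θ) w = trueRisk ℓ (task θ) (wstar θ) →
      ‖wstar θ‖ ≤ ‖w‖)
    (hwInt : Integrable wstar ρ)
    -- the mean of the tasks' weight vectors and its variance
    (m : Vec d) (hm : m = ∫ θ, wstar θ ∂ρ) (hm0 : m ≠ 0)
    (Varm : ℝ) (hVarpos : 0 < Varm)
    (hVarInt : Integrable (fun θ => ‖wstar θ - m‖ ^ 2) ρ)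
    (hVar : Varm ^ 2 = 1 / 2 * ∫ θ, ‖wstar θ - m‖ ^ 2 ∂ρ)
    -- regularization parameter and meta step size
    (lam γ : ℝ)
    (hlam : lam = R * L / (Varm * Real.sqrt n))
    (hγ : γ = ‖m‖ / (L * R * Real.sqrt T))
    -- the biased ERM, as a function of the bias, assumed measurable in the data
    (erm : Vec d → (Fin n → Pt d) → Vec d)
    (hermmeas : ∀ h, Measurable (erm h))
    (herm : ∀ h S w, regRisk ℓ lam S h (erm h S) ≤ regRisk ℓ lam S h w)
    -- the joint distribution of one (task, dataset) observation
    (ν : Measure (Θ × (Fin n → Pt d))) [IsProbabilityMeasure ν]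
    (hν : ν = ρ.bind fun θ =>
      (Measure.dirac θ).prod (Measure.pi fun _ : Fin n => task θ))
    -- exact-gradient meta-SGD
    (H : (Fin T → Θ × (Fin n → Pt d)) → ℕ → Vec d)
    (hH1 : ∀ ω, H ω 1 = 0)
    (hHrec : ∀ ω (t : Fin T), H ω (t.1 + 2)
      = H ω (t.1 + 1) - γ •
          ((-lam) • (erm (H ω (t.1 + 1)) (ω t).2 - H ω (t.1 + 1))))
    -- integrability of all integrands involved
    (hIntInner : ∀ (h : Vec d) θ, Integrable
      (fun S => trueRisk ℓ (task θ) (erm h S))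
      (Measure.pi fun _ : Fin n => task θ))
    (hIntOuter : ∀ h : Vec d, Integrable (fun θ =>
      ∫ S, trueRisk ℓ (task θ) (erm h S)
        ∂(Measure.pi fun _ : Fin n => task θ)) ρ)
    (hIntMeta : Integrable (fun ω =>
      ∫ θ, (∫ S, trueRisk ℓ (task θ)
          (erm ((T : ℝ)⁻¹ • ∑ t : Fin T, H ω (t.1 + 1)) S)
        ∂(Measure.pi fun _ : Fin n => task θ)) ∂ρ)
      (Measure.pi fun _ : Fin T => ν))
    (hIntOracle : Integrable (fun θ => trueRisk ℓ (task θ) (wstar θ)) ρ) :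
    (∫ ω, (∫ θ, (∫ S, trueRisk ℓ (task θ)
          (erm ((T : ℝ)⁻¹ • ∑ t : Fin T, H ω (t.1 + 1)) S)
        ∂(Measure.pi fun _ : Fin n => task θ)) ∂ρ)
      ∂(Measure.pi fun _ : Fin T => ν))
      - (∫ θ, trueRisk ℓ (task θ) (wstar θ) ∂ρ)
      ≤ Varm * (2 * R * L) * (Real.sqrt n)⁻¹
        + ‖m‖ * (L * R) * (Real.sqrt T)⁻¹ := by
  classical
  have hn' : (0 : ℝ) < n := by exact_mod_cast hn
  have hT' : (0 : ℝ) < T := by exact_mod_cast hT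
  have hsn : 0 < √(n : ℝ) := Real.sqrt_pos.2 hn'
  have hsT : 0 < √(T : ℝ) := Real.sqrt_pos.2 hT'
  have hmpos : 0 < ‖m‖ := norm_pos_iff.2 hm0
  have hlam0 : 0 < lam := by rw [hlam]; positivity
  have hγ0 : 0 < γ := by rw [hγ]; positivity
  have hreg : ∀ θ, ∀ᵐ z ∂(task θ), IsRegularPt ℓ L R z := fun θ => by
    filter_upwards [htaskY θ, htaskR θ] with z hzY hzR
    exact ⟨hzR, fun a => hℓ0 a _ hzY, hℓconv _ hzY, hℓlip _ hzY⟩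
  obtain ⟨A, hAm, hAreg, hA⟩ := exists_measurableSet_continuous_minimizer (R := R) hn hL.le hlam0
    hermmeas herm
  let G : Vec d → (Fin n → Pt d) → Vec d := fun h => A.indicator fun S => (-lam) • (erm h S - h)
  have hGm : ∀ h, Measurable (G h) := fun h =>
    (((hermmeas h).sub_const h).const_smul (-lam)).indicator hAm
  have hGA : ∀ S ∈ A, ∀ h, G h S = (-lam) • (erm h S - h) := fun S hS h =>
    Set.indicator_of_mem hS _
  have hGC : ∀ h S, ‖G h S‖ ≤ L * R := by
    intro h S
    by_cases hS : S ∈ A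
    · rw [hGA S hS, neg_smul, norm_neg]
      exact (hA S hS).2 h
    · simp only [G, Set.indicator_of_notMem hS, norm_zero]
      positivity
  have hGcont : ∀ S, Continuous fun h => G h S := by
    intro S
    by_cases hS : S ∈ A
    · have := (hA S hS).1
      simp only [hGA S hS]
      fun_prop
    · simp only [G, Set.indicator_of_notMem hS]
      exact continuous_const
  let G' : Vec d → Θ × (Fin n → Pt d) → Vec d := fun h x => G h x.2
  have hG'm : Measurable (Function.uncurry G') :=
    measurable_uncurry_of_continuous_of_measurable (fun x => hGcont x.2)
      fun h => (hGm h).comp measurable_snd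
  have hG'C : ∀ h x, ‖G' h x‖ ≤ L * R := fun h x => hGC h x.2
  set κ : Θ → Measure (Θ × (Fin n → Pt d)) := fun θ =>
    (Measure.dirac θ).prod (Measure.pi fun _ : Fin n => task θ) with hκdef
  have hκ : AEMeasurable κ ρ :=
    aemeasurable_of_bind_ne_zero (by rw [← hν]; exact IsProbabilityMeasure.ne_zero ν)
  have hκmap : ∀ θ, κ θ = (Measure.pi fun _ : Fin n => task θ).map (Prod.mk θ) := fun θ =>
    Measure.dirac_prod θ
  have hνA : ∀ᵐ x ∂ν, x.2 ∈ A := by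
    have hs : MeasurableSet {x : Θ × (Fin n → Pt d) | x.2 ∉ A} := measurable_snd hAm.compl
    rw [ae_iff, hν, Measure.bind_apply hs hκ]
    refine lintegral_eq_zero_of_ae_eq_zero (ae_of_all _ fun θ => ?_)
    simp only [Pi.zero_apply]
    rw [hκmap, Measure.map_apply measurable_prodMk_left hs]
    exact ae_iff.1 ((ae_pi_forall (hreg θ) n).mono fun S hS => hAreg S hS)
  let K : Vec d → ℝ := fun h => ∫ x, ⟪G' h x, h - m⟫_ℝ ∂ν
  have hK : ∀ h, Integrable (fun θ => ∫ S, ⟪G h S, h - m⟫_ℝ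
        ∂(Measure.pi fun _ : Fin n => task θ)) ρ
      ∧ ∫ θ, ∫ S, ⟪G h S, h - m⟫_ℝ ∂(Measure.pi fun _ : Fin n => task θ) ∂ρ = K h := by
    intro h
    have hψ : Measurable fun x => ⟪G' h x, h - m⟫_ℝ :=
      ((hGm h).comp measurable_snd).inner_const
    have hQ := integrable_integral_bind hκ
      (fun θ => by rw [hκdef]; infer_instance) hψ (B := L * R * ‖h - m‖)
      (fun x => (abs_real_inner_le_norm _ _).trans
        (mul_le_mul_of_nonneg_right (hG'C h x) (norm_nonneg _)))
    have hθ : ∀ θ, ∫ x, ⟪G' h x, h - m⟫_ℝ ∂κ θ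
        = ∫ S, ⟪G h S, h - m⟫_ℝ ∂(Measure.pi fun _ : Fin n => task θ) := fun θ => by
      rw [hκmap, integral_map measurable_prodMk_left.aemeasurable hψ.aestronglyMeasurable]
    simp only [hθ, ← hν] at hQ
    exact hQ
  have hiter : ∀ᵐ ω ∂(Measure.pi fun _ : Fin T => ν), ∀ t : ℕ, t ≤ T →
      H ω (t + 1) = sgdIter G' γ ω t := by
    have hωA : ∀ᵐ ω ∂(Measure.pi fun _ : Fin T => ν), ∀ t, (ω t).2 ∈ A :=
      ae_all_iff.2 fun t =>
        (measurePreserving_eval (fun _ : Fin T => ν) t).quasiMeasurePreserving.ae hνA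
    filter_upwards [hωA] with ω hω t
    induction t with
    | zero => exact fun _ => hH1 ω
    | succ t ih =>
      intro ht
      have h1 := hHrec ω ⟨t, ht⟩
      rw [sgdIter_succ ω ⟨t, ht⟩, ← ih (by omega)]
      exact h1.trans (by rw [← hGA _ (hω ⟨t, ht⟩)])
  have houter : ∀ u : Fin T → Vec d,
      ∫ θ, (∫ S, trueRisk ℓ (task θ) (erm ((T : ℝ)⁻¹ • ∑ t, u t) S)
        ∂(Measure.pi fun _ : Fin n => task θ)) ∂ρ
      ≤ ∫ θ, trueRisk ℓ (task θ) (wstar θ) ∂ρ + lam / 2 * ∫ θ, ‖wstar θ - m‖ ^ 2 ∂ρ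
        + (T : ℝ)⁻¹ * ∑ t, K (u t) + (L * R) ^ 2 / (lam * n) := by
    intro u
    have hI2 := hVarInt.const_mul (lam / 2)
    have hI3 : Integrable (fun θ => (T : ℝ)⁻¹ * ∑ t, ∫ S, ⟪G (u t) S, u t - m⟫_ℝ
        ∂(Measure.pi fun _ : Fin n => task θ)) ρ :=
      (integrable_finsetSum _ fun t _ => (hK (u t)).1).const_mul _
    refine (integral_mono (hIntOuter _)
      (((hIntOracle.add hI2).add hI3).add (integrable_const ((L * R) ^ 2 / (lam * n))))
      fun θ => integral_trueRisk_average_le hn hL.le hlam0 hR.le hT (hreg θ) (hlossInt θ) hermmeas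
        herm hGm hGC (fun S hS h => hGA S (hAreg S hS) h) u m (wstar θ)).trans_eq ?_
    rw [integral_add' ((hIntOracle.add hI2).add hI3) (integrable_const _),
      integral_add' (hIntOracle.add hI2) hI3, integral_add' hIntOracle hI2, integral_const_mul,
      integral_const_mul, integral_finsetSum _ fun t _ => (hK (u t)).1]
    simp only [fun h => (hK h).2, integral_const, probReal_univ, one_smul]
  obtain ⟨hKI, hKle⟩ := sum_integral_sgdIter_le (T := T) ν hγ0 hG'm hG'C m
  set E₀ := ∫ θ, trueRisk ℓ (task θ) (wstar θ) ∂ρ with hE₀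
  set V₀ := ∫ θ, ‖wstar θ - m‖ ^ 2 ∂ρ with hV₀
  have hmeta := integral_mono_ae hIntMeta
    (((integrable_const (E₀ + lam / 2 * V₀)).add
      ((integrable_finsetSum Finset.univ fun t _ => hKI t).const_mul (T : ℝ)⁻¹)).add
      (integrable_const ((L * R) ^ 2 / (lam * n)))) (by
    filter_upwards [hiter] with ω hω
    refine (houter fun t => H ω (t.1 + 1)).trans_eq ?_
    simp only [Pi.add_apply, fun t : Fin T => hω t.1 t.2.le, K])
  rw [integral_add' ((integrable_const _).add
      ((integrable_finsetSum Finset.univ fun t _ => hKI t).const_mul _)) (integrable_const _),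
    integral_add' (integrable_const _)
      ((integrable_finsetSum Finset.univ fun t _ => hKI t).const_mul _),
    integral_const_mul, integral_finsetSum _ fun t _ => hKI t] at hmeta
  simp only [integral_const, probReal_univ, one_smul] at hmeta
  have hKle' := mul_le_mul_of_nonneg_left hKle (inv_nonneg.2 hT'.le)
  have hsn2 : √(n : ℝ) ^ 2 = n := Real.sq_sqrt hn'.le
  have hsT2 : √(T : ℝ) ^ 2 = T := Real.sq_sqrt hT'.le
  have e1 : (L * R) ^ 2 / (lam * n) = Varm * (R * L) * (√(n : ℝ))⁻¹ := by
    rw [hlam]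
    field_simp
    exact hsn2
  have e2 : lam / 2 * V₀ = Varm * (R * L) * (√(n : ℝ))⁻¹ := by
    have : V₀ = 2 * Varm ^ 2 := by rw [hVar]; ring
    rw [this, hlam]
    field_simp
  have e3 : (T : ℝ)⁻¹ * (‖m‖ ^ 2 / (2 * γ) + γ * T * (L * R) ^ 2 / 2)
      = ‖m‖ * (L * R) * (√(T : ℝ))⁻¹ := by
    rw [hγ]
    field_simp
    rw [hsT2]
    ring
  linarith
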